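/- arXiv:math/0302017 — 4 statements merged into one kernel-verified Lean document; each statement's English description precedes it below -/
import Mathlib

section
/- Let p be a prime and let R be a commutative Noetherian local pro-p domain of characteristic zero whose Krull dimension equals d + 1 for a natural number d. Then for every natural number n and every subgroup G of GL_n(R) there exist a natural number m and an injective group homomorphism from G into GL_m(ℤ_p⟦t₁, …, t_d⟧), the general linear group over the power series ring in d variables over the p-adic integers. -/
theorem gl_embed {R S : Type} [CommRing R] [CommRing S] (r n : ℕ)
    (C : R →+* Matrix (Fin r) (Fin r) S) (hC : Function.Injective C)
    (G : Subgroup (Matrix.GeneralLinearGroup (Fin n) R)) :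
    ∃ (m : ℕ) (f : G →* Matrix.GeneralLinearGroup (Fin m) S), Function.Injective f := by
  let F : Matrix (Fin n) (Fin n) R →+* Matrix (Fin (n * r)) (Fin (n * r)) S :=
    ((Matrix.reindexAlgEquiv S S (finProdFinEquiv (m := n) (n := r))).toRingEquiv.toRingHom.comp
      (Matrix.compRingEquiv (Fin n) (Fin r) S).toRingHom).comp C.mapMatrix
  have hF : Function.Injective F := by
    have h1 : Function.Injective (C.mapMatrix (m := Fin n)) := Matrix.map_injective hC
    exact ((RingEquiv.injective (Matrix.reindexAlgEquiv S S
      (finProdFinEquiv (m := n) (n := r))).toRingEquiv).comp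
      (RingEquiv.injective (Matrix.compRingEquiv (Fin n) (Fin r) S))).comp h1
  refine ⟨n * r, (Units.map F.toMonoidHom).comp G.subtype, ?_⟩
  rw [MonoidHom.coe_comp]
  exact (Units.map_injective (f := F.toMonoidHom) hF).comp G.subtype_injective

theorem exists_rep {A R : Type} [CommRing A] [IsDomain A] [CommRing R] [IsDomain R] [Algebra A R]
    [Module.Finite A R] (hinj : Function.Injective (algebraMap A R)) :
    ∃ (r : ℕ) (c : A) (B : R →ₗ[A] Matrix (Fin r) (Fin r) A), c ≠ 0 ∧ B 1 = c • 1 ∧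
      (∀ x y, B x * B y = c • B (x * y)) ∧ Function.Injective B := by
  classical
  have : FaithfulSMul A R := (faithfulSMul_iff_algebraMap_injective A R).2 hinj
  have : Module.IsTorsionFree A R := inferInstance
  let K := FractionRing A
  let L := FractionRing R
  let _ : Algebra K L := FractionRing.liftAlgebra A L
  have : IsScalarTower A K L := FractionRing.isScalarTower_liftAlgebra A L
  have : FiniteDimensional K L := inferInstance
  let b := Module.finBasis K L
  let ρ : R →ₐ[A] Matrix (Fin (Module.finrank K L)) (Fin (Module.finrank K L)) K :=
    ((Algebra.leftMulMatrix b).restrictScalars A).comp (IsScalarTower.toAlgHom A R L)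
  have hρ : Function.Injective ρ :=
    (Algebra.leftMulMatrix_injective b).comp (IsFractionRing.injective R L)
  obtain ⟨s, hs⟩ := (Module.Finite.fg_top : (⊤ : Submodule A R).FG)
  obtain ⟨c, hc⟩ := IsLocalization.exist_integer_multiples_of_finset (nonZeroDivisors A)
    ((s ×ˢ (Finset.univ : Finset (Fin (Module.finrank K L) × Fin (Module.finrank K L)))).image
      (fun t => (ρ t.1 t.2.1 t.2.2 : K)))
  let ι : Matrix (Fin (Module.finrank K L)) (Fin (Module.finrank K L)) A →ₐ[A]
    Matrix (Fin (Module.finrank K L)) (Fin (Module.finrank K L)) K :=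
      (Algebra.ofId A K).mapMatrix
  have hι : Function.Injective ι := Matrix.map_injective (IsFractionRing.injective A K)
  have key : ∀ x : R, (c : A) • ρ x ∈ LinearMap.range ι.toLinearMap := by
    intro x
    have hx : x ∈ Submodule.span A (s : Set R) := by rw [hs]; trivial
    induction hx using Submodule.span_induction with
    | mem x hx =>
      have : ∀ i j, ∃ y : A, algebraMap A K y = (c : A) • ρ x i j := by
        intro i j
        exact hc _ (Finset.mem_image.2 ⟨(x, (i, j)), by simpa using hx, rfl⟩)
      choose y hy using this
      exact ⟨Matrix.of y, by ext i j; simpa [ι, Algebra.ofId_apply] using hy i j⟩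
    | zero => simp
    | add x y _ _ hx hy => rw [map_add, smul_add]; exact add_mem hx hy
    | smul a x _ hx => rw [map_smul, smul_comm]; exact Submodule.smul_mem _ _ hx
  choose B hB using key
  replace hB : ∀ x, ι (B x) = (c : A) • ρ x := hB
  have hc0 : (c : A) ≠ 0 := nonZeroDivisors.coe_ne_zero c
  refine ⟨_, c, ⟨⟨B, fun x y => hι ?_⟩, fun a x => hι ?_⟩, hc0, hι ?_, fun x y => hι ?_, ?_⟩
  · simp [hB]
  · change ι (B (a • x)) = ι (a • B x)
    rw [hB, map_smul, map_smul, hB, smul_comm]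
  · change ι (B 1) = _
    simp [hB]
  · change ι (B x * B y) = ι ((c : A) • B (x * y))
    simp [hB, smul_smul]
  · intro x y h
    have h2 : B x = B y := h
    apply hρ
    have h1 : (c : A) • ρ x = (c : A) • ρ y := by rw [← hB, ← hB, h2]
    ext i j
    have h3 := congrFun (congrFun h1 i) j
    simp only [Matrix.smul_apply, Algebra.smul_def] at h3
    exact mul_left_cancel₀ (by simpa using hc0) h3

theorem exists_lattice {A R O : Type} [CommRing A] [CommRing R] [Algebra A R]
    [CommRing O] [IsDomain O] [IsPrincipalIdealRing O] (ev : A →+* O) (r : ℕ) (c : A)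
    (hc : ev c ≠ 0)
    (B : R →ₗ[A] Matrix (Fin r) (Fin r) A) (h1 : B 1 = c • 1)
    (hm : ∀ x y, B x * B y = c • B (x * y)) :
    ∃ P : Matrix (Fin r) (Fin r) O, P.det ≠ 0 ∧
      ∀ x, ∃ E : Matrix (Fin r) (Fin r) O, (B x).map ev * P = ev c • (P * E) := by
  classical
  let D : R → Matrix (Fin r) (Fin r) O := fun x => (B x).map ev
  have hD1 : D 1 = ev c • 1 := by
    ext i j
    by_cases h : i = j <;> simp [D, h1, Matrix.one_apply, h]
  have hDm : ∀ x y, D x * D y = ev c • D (x * y) := by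
    intro x y
    have := congrArg (ev.mapMatrix) (hm x y)
    rw [map_mul] at this
    refine Eq.trans this ?_
    ext i j; simp [D]
  let Λ : Submodule O (Fin r → O) := Submodule.span O (Set.range fun t : R × (Fin r → O) =>
    (D t.1).mulVec t.2)
  have hmem : ∀ x v, (D x).mulVec v ∈ Λ := fun x v => Submodule.subset_span ⟨(x, v), rfl⟩
  have hstab : ∀ x, ∀ v ∈ Λ, ∃ w ∈ Λ, (D x).mulVec v = ev c • w := by
    intro x v hv
    induction hv using Submodule.span_induction with
    | mem v hv =>
      obtain ⟨⟨y, u⟩, rfl⟩ := hv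
      exact ⟨(D (x * y)).mulVec u, hmem _ _, by
        simp [Matrix.mulVec_mulVec, hDm, Matrix.smul_mulVec]⟩
    | zero => exact ⟨0, zero_mem _, by simp⟩
    | add v w _ _ hv hw =>
      obtain ⟨v', hv', e⟩ := hv
      obtain ⟨w', hw', e'⟩ := hw
      exact ⟨v' + w', add_mem hv' hw', by rw [Matrix.mulVec_add, e, e', smul_add]⟩
    | smul a v _ hv =>
      obtain ⟨v', hv', e⟩ := hv
      exact ⟨a • v', Submodule.smul_mem _ _ hv', by rw [Matrix.mulVec_smul, e, smul_comm]⟩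
  have hcv : ∀ v, ev c • v ∈ Λ := by
    intro v
    have := hmem 1 v
    rwa [hD1, Matrix.smul_mulVec, Matrix.one_mulVec] at this
  have hrank : Module.finrank O Λ = r := by
    apply le_antisymm
    · simpa using Submodule.finrank_le Λ
    · let f : (Fin r → O) →ₗ[O] Λ := (LinearMap.lsmul O (Fin r → O) (ev c)).codRestrict Λ hcv
      have hf : Function.Injective f := by
        intro v w h
        have h' : ev c • v = ev c • w := congrArg Subtype.val h
        exact smul_right_injective _ hc h'
      simpa using LinearMap.finrank_le_finrank_of_injective hf
  let b : Module.Basis (Fin r) O Λ := Module.finBasisOfFinrankEq O Λ hrank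
  let P : Matrix (Fin r) (Fin r) O := Matrix.of fun i j => (b j : Fin r → O) i
  -- every element of the lattice is P times something
  have hP : ∀ v ∈ Λ, ∃ w, v = P.mulVec w := by
    intro v hv
    refine ⟨b.repr ⟨v, hv⟩, ?_⟩
    have := congrArg Subtype.val (b.sum_repr ⟨v, hv⟩)
    simp only [Submodule.coe_sum, Submodule.coe_smul] at this
    conv_lhs => rw [← this]
    ext i
    simp [P, Matrix.mulVec, dotProduct, mul_comm]
  have hPM : ∀ (M : Matrix (Fin r) (Fin r) O), (∀ j, M.col j ∈ Λ) → ∃ E, M = P * E := by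
    intro M hM
    choose w hw using fun j => hP _ (hM j)
    refine ⟨Matrix.of fun i j => w j i, ?_⟩
    ext i j
    have := congrFun (hw j) i
    simpa [Matrix.mul_apply, Matrix.mulVec, dotProduct] using this
  refine ⟨P, ?_, ?_⟩
  · obtain ⟨E, hE⟩ := hPM (ev c • 1) (by
      intro j
      have := hcv (Pi.single j 1)
      convert this using 1
      ext i; simp [Matrix.col, Matrix.one_apply, Pi.single_apply])
    intro h0
    have := congrArg Matrix.det hE
    rw [Matrix.det_mul, h0, zero_mul, Matrix.det_smul, Matrix.det_one, mul_one] at this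
    exact hc (eq_zero_of_pow_eq_zero this)
  · intro x
    have : ∀ j, ∃ w ∈ Λ, (D x).mulVec (b j : Fin r → O) = ev c • w := fun j =>
      hstab x _ (b j).2
    choose w hw e using this
    obtain ⟨E, hE⟩ := hPM (Matrix.of fun i j => w j i) (fun j => by
      have h : (Matrix.of fun i j => w j i).col j = w j := rfl
      rw [h]; exact hw j)
    refine ⟨E, ?_⟩
    rw [← hE]
    ext i j
    have := congrFun (e j) i
    simpa [Matrix.mul_apply, Matrix.mulVec, dotProduct, D, P] using this

theorem padic_hasBasis (p : ℕ) [Fact p.Prime] :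
    (nhds (0 : ℤ_[p])).HasBasis (fun _ : ℕ => True)
      (fun n => ((Ideal.span {(p : ℤ_[p]) ^ n} : Ideal ℤ_[p]) : Set ℤ_[p])) := by
  have hp1 : (1 : ℝ) < p := by exact_mod_cast (Fact.out : p.Prime).one_lt
  have e : ∀ n : ℕ, ((Ideal.span {(p : ℤ_[p]) ^ n} : Ideal ℤ_[p]) : Set ℤ_[p]) =
      Metric.closedBall 0 ((p : ℝ)⁻¹ ^ n) := by
    intro n
    ext x
    rw [SetLike.mem_coe, ← PadicInt.norm_le_pow_iff_mem_span_pow, mem_closedBall_zero_iff]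
    simp
  simp_rw [e]
  exact Metric.nhds_basis_closedBall_pow (by positivity) (inv_lt_one_of_one_lt₀ hp1)

instance padic_isLinearTopology (p : ℕ) [Fact p.Prime] : IsLinearTopology ℤ_[p] ℤ_[p] :=
  IsLinearTopology.mk_of_hasBasis' _ (padic_hasBasis p) (fun s r _ hm => s.smul_mem r hm)

theorem padic_span_closed (p : ℕ) [Fact p.Prime] (n : ℕ) :
    IsClosed ((Ideal.span {(p : ℤ_[p]) ^ n} : Ideal ℤ_[p]) : Set ℤ_[p]) := by
  have e : ((Ideal.span {(p : ℤ_[p]) ^ n} : Ideal ℤ_[p]) : Set ℤ_[p]) =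
      Metric.closedBall 0 ((p : ℝ)⁻¹ ^ n) := by
    ext x
    rw [SetLike.mem_coe, ← PadicInt.norm_le_pow_iff_mem_span_pow, mem_closedBall_zero_iff]
    simp
  rw [e]
  exact Metric.isClosed_closedBall

open scoped MvPowerSeries.WithPiTopology

theorem padic_topNilp (p : ℕ) [Fact p.Prime] (x : ℤ_[p]) :
    IsTopologicallyNilpotent ((p : ℤ_[p]) * x) := by
  rw [IsTopologicallyNilpotent, (padic_hasBasis p).tendsto_right_iff]
  intro n _
  filter_upwards [Filter.eventually_ge_atTop n] with m hm
  rw [SetLike.mem_coe, Ideal.mem_span_singleton, mul_pow]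
  exact (pow_dvd_pow _ hm).trans (dvd_mul_right _ _)

theorem hasEval_fin {S : Type} [CommRing S] [TopologicalSpace S] {d : ℕ} (a : Fin d → S)
    (h : ∀ i, IsTopologicallyNilpotent (a i)) : MvPowerSeries.HasEval a :=
  ⟨h, by simp [Filter.cofinite_eq_bot]⟩

theorem exists_point (p : ℕ) [Fact p.Prime] (d : ℕ) (c : MvPowerSeries (Fin d) ℤ_[p]) (hc : c ≠ 0) :
    ∃ (a : Fin d → ℤ_[p]), ∀ ha : MvPowerSeries.HasEval (fun i => (p : ℤ_[p]) * a i),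
      MvPowerSeries.aeval ha c ≠ 0 := by
  classical
  let D : (Fin d →₀ ℕ) → ℕ := fun I => ∑ i, I i
  have hp0 : (p : ℤ_[p]) ≠ 0 := by exact_mod_cast (Fact.out : p.Prime).ne_zero
  have hex : ∃ m, ∃ I, D I = m ∧ MvPowerSeries.coeff I c ≠ 0 := by
    by_contra! hcon
    exact hc (by ext I; simpa using hcon _ I rfl)
  let m := Nat.find hex
  obtain ⟨I₀, hI₀, hcI₀⟩ := Nat.find_spec hex
  have hmin : ∀ I, D I < m → MvPowerSeries.coeff I c = 0 := by
    intro I hI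
    by_contra hcon
    exact Nat.find_min hex hI ⟨I, rfl, hcon⟩
  let T : Finset (Fin d →₀ ℕ) := Finset.finsuppAntidiag Finset.univ m
  have hT : ∀ I, I ∈ T ↔ D I = m := by
    intro I
    simp [T, D, Finset.mem_finsuppAntidiag]
  let q : MvPolynomial (Fin d) ℤ_[p] := ∑ I ∈ T, MvPolynomial.monomial I (MvPowerSeries.coeff I c)
  have hq : q ≠ 0 := by
    intro h
    have := congrArg (MvPolynomial.coeff I₀) h
    simp only [q, MvPolynomial.coeff_sum, MvPolynomial.coeff_monomial, MvPolynomial.coeff_zero,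
      Finset.sum_ite_eq', if_pos ((hT I₀).2 hI₀)] at this
    exact hcI₀ this
  obtain ⟨b, hb⟩ : ∃ b, MvPolynomial.eval b q ≠ 0 := by
    by_contra! hcon
    exact hq (MvPolynomial.funext fun x => by simpa using hcon x)
  obtain ⟨k, hk⟩ : ∃ k : ℕ, MvPolynomial.eval b q ∉ Ideal.span {(p : ℤ_[p]) ^ (k + 1)} := by
    refine ⟨(MvPolynomial.eval b q).valuation, fun h => ?_⟩
    have := (PadicInt.mem_span_pow_iff_le_valuation _ hb _).1 h
    omega
  refine ⟨fun i => (p : ℤ_[p]) ^ k * b i, fun ha h0 => hk ?_⟩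
  have hs := MvPowerSeries.hasSum_aeval ha c
  rw [h0] at hs
  let t : (Fin d →₀ ℕ) → ℤ_[p] := fun I => MvPowerSeries.coeff I c *
    ((p : ℤ_[p]) ^ ((k + 1) * D I) * I.prod fun s e => b s ^ e)
  have ht : (fun I : Fin d →₀ ℕ => (MvPowerSeries.coeff I) c •
      I.prod fun s e => ((p : ℤ_[p]) * (p ^ k * b s)) ^ e) = t := by
    funext I
    simp only [t, smul_eq_mul]
    congr 1
    rw [Finsupp.prod_fintype _ _ (by simp), Finsupp.prod_fintype _ _ (by simp), pow_mul,
      ← Finset.prod_pow_eq_pow_sum, ← Finset.prod_mul_distrib]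
    refine Finset.prod_congr rfl fun i _ => ?_
    rw [← mul_pow]
    ring
  rw [ht] at hs
  have hq2 : ∑ I ∈ T, t I = (p : ℤ_[p]) ^ ((k + 1) * m) * MvPolynomial.eval b q := by
    simp only [q, map_sum, MvPolynomial.eval_monomial, Finset.mul_sum]
    refine Finset.sum_congr rfl fun I hI => ?_
    simp only [t, (hT I).1 hI]
    ring
  have hmem : ∀ I ∉ T, t I ∈ Ideal.span {(p : ℤ_[p]) ^ ((k + 1) * (m + 1))} := by
    intro I hI
    rw [hT] at hI
    rcases lt_or_gt_of_ne hI with h | h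
    · simp [t, hmin I h]
    · refine Ideal.mul_mem_left _ _ (Ideal.mul_mem_right _ _ ?_)
      rw [Ideal.mem_span_singleton]
      exact pow_dvd_pow _ (Nat.mul_le_mul le_rfl h)
  have hfin : ∑ I ∈ T, t I ∈ Ideal.span {(p : ℤ_[p]) ^ ((k + 1) * (m + 1))} := by
    have hlim : Filter.Tendsto (fun s : Finset (Fin d →₀ ℕ) => (∑ I ∈ T, t I) - ∑ I ∈ s, t I)
        Filter.atTop (nhds ((∑ I ∈ T, t I) - 0)) := tendsto_const_nhds.sub hs
    rw [sub_zero] at hlim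
    refine (padic_span_closed p _).mem_of_tendsto hlim ?_
    filter_upwards [Filter.eventually_ge_atTop T] with s hs
    rw [← Finset.sum_sdiff (show T ⊆ s from hs), sub_add_cancel_right]
    refine neg_mem (Ideal.sum_mem _ fun I hI => hmem I (Finset.mem_sdiff.1 hI).2)
  rw [hq2, Ideal.mem_span_singleton, mul_add, mul_one, pow_add] at hfin
  rw [Ideal.mem_span_singleton]
  exact (mul_dvd_mul_iff_left (pow_ne_zero _ hp0)).1 hfin

theorem exists_shift (p : ℕ) [Fact p.Prime] (d : ℕ) (c : MvPowerSeries (Fin d) ℤ_[p]) (hc : c ≠ 0) :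
    ∃ τ : MvPowerSeries (Fin d) ℤ_[p] →+* MvPowerSeries (Fin d) ℤ_[p], Function.Injective τ ∧
      MvPowerSeries.constantCoeff (τ c) ≠ 0 := by
  obtain ⟨a, ha⟩ := exists_point p d c hc
  have hE : ∀ b : Fin d → ℤ_[p], MvPowerSeries.HasEval
      (fun i => (MvPowerSeries.X i + MvPowerSeries.C ((p : ℤ_[p]) * b i) :
        MvPowerSeries (Fin d) ℤ_[p])) := fun b => hasEval_fin _ fun i =>
    MvPowerSeries.LinearTopology.isTopologicallyNilpotent_of_constantCoeff
      (by simpa using padic_topNilp p (b i))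
  have hC : ∀ r : ℤ_[p], (MvPowerSeries.C r : MvPowerSeries (Fin d) ℤ_[p]) = algebraMap _ _ r :=
    fun r => rfl
  have hX : ∀ b i, MvPowerSeries.aeval (hE b) (MvPowerSeries.X i : MvPowerSeries (Fin d) ℤ_[p]) =
      MvPowerSeries.X i + MvPowerSeries.C ((p : ℤ_[p]) * b i) := by
    intro b i
    rw [← MvPolynomial.coe_X, MvPowerSeries.aeval_coe, MvPolynomial.aeval_X, MvPolynomial.coe_X]
  refine ⟨(MvPowerSeries.aeval (hE a) : MvPowerSeries (Fin d) ℤ_[p] →ₐ[ℤ_[p]] _).toRingHom, ?_, ?_⟩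
  · have hid : (MvPowerSeries.aeval (hE (-a))).comp (MvPowerSeries.aeval (hE a)) =
        AlgHom.id ℤ_[p] (MvPowerSeries (Fin d) ℤ_[p]) := by
      rw [MvPowerSeries.comp_aeval _ (MvPowerSeries.continuous_aeval _),
        ← MvPowerSeries.aeval_unique (ε := AlgHom.id ℤ_[p] (MvPowerSeries (Fin d) ℤ_[p]))
          continuous_id]
      congr! 2 with i
      change MvPowerSeries.aeval (hE (-a)) (MvPowerSeries.X i + MvPowerSeries.C ((p : ℤ_[p]) * a i))
        = MvPowerSeries.X i
      rw [map_add, hX, hC (p * a i), AlgHom.commutes, ← hC]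
      simp
    refine Function.LeftInverse.injective (g := MvPowerSeries.aeval (hE (-a))) fun x => ?_
    exact DFunLike.congr_fun hid x
  · let ε : MvPowerSeries (Fin d) ℤ_[p] →ₐ[ℤ_[p]] ℤ_[p] :=
      { MvPowerSeries.constantCoeff with commutes' := fun r => by simp [← hC] }
    have hε : Continuous ε := MvPowerSeries.WithPiTopology.continuous_constantCoeff _
    have h1 := MvPowerSeries.comp_aeval (hE a) hε
    have h2 := DFunLike.congr_fun h1 c
    have h3 : (fun s => ε (MvPowerSeries.X s + MvPowerSeries.C ((p : ℤ_[p]) * a s))) =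
      fun i => (p : ℤ_[p]) * a i := by
      funext i
      change MvPowerSeries.constantCoeff _ = _
      simp
    have h4 := h3 ▸ (hE a).map hε
    have h5 := ha h4
    change ε (MvPowerSeries.aeval (hE a) c) ≠ 0
    rw [← AlgHom.comp_apply, h1]
    convert h5 with i
    exact congrFun h3 i


theorem rescale_decomp {O : Type} [CommRing O] (d : ℕ) (q : O) (g : MvPowerSeries (Fin d) O) :
    ∃ h, MvPowerSeries.rescale (fun _ => q) g =
      MvPowerSeries.C (MvPowerSeries.constantCoeff g) + MvPowerSeries.C q * h := by
  classical
  have : ∀ n : Fin d →₀ ℕ, ∃ y, MvPowerSeries.coeff n (MvPowerSeries.rescale (fun _ => q) g)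
      = (if n = 0 then MvPowerSeries.constantCoeff g else 0) + q * y := by
    intro n
    rw [MvPowerSeries.coeff_rescale]
    by_cases h : n = 0
    · exact ⟨0, by simp [h]⟩
    · obtain ⟨i, hi⟩ := Finsupp.ne_iff.1 h
      have hi : n i ≠ 0 := hi
      have hd : q ∣ (n.prod fun s m => q ^ m) :=
        (dvd_pow_self q hi).trans (Finset.dvd_prod_of_mem (fun i => q ^ n i) (by simpa using hi))
      obtain ⟨y, hy⟩ := hd
      refine ⟨y * MvPowerSeries.coeff n g, ?_⟩
      rw [if_neg h, zero_add, ← mul_assoc, ← hy]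
  choose y hy using this
  let h : MvPowerSeries (Fin d) O := fun n => y n
  have hh : ∀ n, MvPowerSeries.coeff n h = y n := fun _ => rfl
  refine ⟨h, ?_⟩
  ext n
  rw [hy, map_add, MvPowerSeries.coeff_C, MvPowerSeries.coeff_C_mul, hh]

theorem rescale_injective {O : Type} [CommRing O] [IsDomain O] (d : ℕ) (q : O) (hq : q ≠ 0) :
    Function.Injective (MvPowerSeries.rescale (fun _ : Fin d => q)) := by
  rw [injective_iff_map_eq_zero]
  intro g hg
  ext n
  have := congrArg (MvPowerSeries.coeff n) hg
  rw [MvPowerSeries.coeff_rescale] at this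
  rw [map_zero] at this ⊢
  refine (mul_eq_zero.1 this).resolve_left ?_
  exact Finset.prod_ne_zero_iff.2 fun i _ => pow_ne_zero _ hq

theorem padic_dvd_pow (p : ℕ) [Fact p.Prime] (e : ℤ_[p]) (he : e ≠ 0) :
    ∃ (N : ℕ) (y : ℤ_[p]), (p : ℤ_[p]) ^ N = e * (p * y) := by
  refine ⟨e.valuation + 1, ((PadicInt.unitCoeff he)⁻¹ : ℤ_[p]ˣ), ?_⟩
  have := PadicInt.unitCoeff_spec he
  rw [pow_succ]
  have h := (PadicInt.unitCoeff he).mul_inv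
  linear_combination (- (p : ℤ_[p]) ^ e.valuation * p) * h -
    (p * ((PadicInt.unitCoeff he)⁻¹ : ℤ_[p]ˣ)) * this

theorem exists_rep_powerSeries (p : ℕ) [Fact p.Prime] (d : ℕ) (R : Type) [CommRing R] [IsDomain R]
    [Algebra (MvPowerSeries (Fin d) ℤ_[p]) R] [Module.Finite (MvPowerSeries (Fin d) ℤ_[p]) R]
    (hinj : Function.Injective (algebraMap (MvPowerSeries (Fin d) ℤ_[p]) R)) :
    ∃ (r : ℕ) (C : R →+* Matrix (Fin r) (Fin r) (MvPowerSeries (Fin d) ℤ_[p])),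
      Function.Injective C := by
  classical
  have hdom : IsDomain (MvPowerSeries (Fin d) ℤ_[p]) := NoZeroDivisors.to_isDomain _
  obtain ⟨r, c, B, hc, hB1, hBm, hBi⟩ := exists_rep hinj
  obtain ⟨τ, hτ, hτc⟩ := exists_shift p d c hc
  let ev : MvPowerSeries (Fin d) ℤ_[p] →+* ℤ_[p] := (MvPowerSeries.constantCoeff).comp τ
  have hev : ev c ≠ 0 := hτc
  obtain ⟨P, hP, hE⟩ := exists_lattice ev r c hev B hB1 hBm
  choose E hE using hE
  obtain ⟨N, y, hN⟩ := padic_dvd_pow p (ev c * P.det) (mul_ne_zero hev hP)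
  have hpN : (p : ℤ_[p]) ^ N ≠ 0 := pow_ne_zero _ (by exact_mod_cast (Fact.out : p.Prime).ne_zero)
  let ψ : MvPowerSeries (Fin d) ℤ_[p] →+* MvPowerSeries (Fin d) ℤ_[p] := (MvPowerSeries.rescale (fun _ => (p : ℤ_[p]) ^ N)).comp τ
  have hψi : Function.Injective ψ := (rescale_injective d _ hpN).comp hτ
  let k : ℤ_[p] →+* MvPowerSeries (Fin d) ℤ_[p] := MvPowerSeries.C
  have hk : Function.Injective k := MvPowerSeries.C_injective
  have hψ : ∀ g, ∃ h, ψ g = k (ev g) + k ((p : ℤ_[p]) ^ N) * h := fun g =>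
    rescale_decomp d ((p : ℤ_[p]) ^ N) (τ g)
  choose H hH using hψ
  -- the image of c
  obtain ⟨w, hw⟩ : ∃ w : (MvPowerSeries (Fin d) ℤ_[p])ˣ, ψ c = k (ev c) * w := by
    have hu : IsUnit (1 + k (P.det * (p * y)) * H c : MvPowerSeries (Fin d) ℤ_[p]) := by
      rw [MvPowerSeries.isUnit_iff_constantCoeff]
      have : MvPowerSeries.constantCoeff (1 + k (P.det * (p * y)) * H c : MvPowerSeries (Fin d) ℤ_[p]) =
        1 + (p : ℤ_[p]) * (P.det * y * MvPowerSeries.constantCoeff (H c)) := by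
          rw [map_add, map_mul, map_one]
          simp only [k, MvPowerSeries.constantCoeff_C]
          ring
      rw [this]
      by_contra hcon
      have h1 : (1 + (p : ℤ_[p]) * (P.det * y * MvPowerSeries.constantCoeff (H c))) ∈
        IsLocalRing.maximalIdeal ℤ_[p] := hcon
      have h2 : (p : ℤ_[p]) * (P.det * y * MvPowerSeries.constantCoeff (H c)) ∈
        IsLocalRing.maximalIdeal ℤ_[p] := by
        rw [PadicInt.maximalIdeal_eq_span_p]
        exact Ideal.mul_mem_right _ _ (Ideal.mem_span_singleton_self _)
      have h3 := (Ideal.add_mem_iff_left _ h2).1 h1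
      exact (Ideal.ne_top_iff_one _).1 (IsLocalRing.maximalIdeal.isMaximal ℤ_[p]).ne_top h3
    refine ⟨hu.unit, ?_⟩
    rw [hH, hN, IsUnit.unit_spec, mul_assoc (ev c), map_mul k (ev c)]
    ring
  let kM := k.mapMatrix (m := Fin r)
  let ψM := ψ.mapMatrix (m := Fin r)
  let Pm := kM P
  let Qm := kM P.adjugate
  have hPQ : Pm * Qm = k P.det • 1 := by
    simp only [Pm, Qm, ← map_mul, Matrix.mul_adjugate]
    ext i j
    by_cases h : i = j <;> simp [kM, Matrix.one_apply, h]
  have hQP : Qm * Pm = k P.det • 1 := by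
    simp only [Pm, Qm, ← map_mul, Matrix.adjugate_mul]
    ext i j
    by_cases h : i = j <;> simp [kM, Matrix.one_apply, h]
  have hdvd : ∀ x, ∃ X, Qm * ψM (B x) * Pm = (k P.det * ψ c) • X := by
    intro x
    let HM : Matrix (Fin r) (Fin r) (MvPowerSeries (Fin d) ℤ_[p]) := (B x).map H
    have h1 : ψM (B x) = kM ((B x).map ev) + k ((p : ℤ_[p]) ^ N) • HM := by
      ext i j
      simp [ψM, kM, HM, hH]
    have h2 : Qm * kM ((B x).map ev) * Pm = k (ev c * P.det) • kM (E x) := by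
      simp only [Qm, Pm, ← map_mul]
      rw [mul_assoc, hE, Matrix.mul_smul, ← mul_assoc, Matrix.adjugate_mul]
      ext i j
      simp [kM, mul_assoc]
    refine ⟨(↑w⁻¹ : MvPowerSeries (Fin d) ℤ_[p]) • (kM (E x) + k (p * y) • (Qm * HM * Pm)), ?_⟩
    have h4 : k P.det * ψ c * (↑w⁻¹ : MvPowerSeries (Fin d) ℤ_[p]) = k (ev c * P.det) := by
      rw [hw, ← mul_assoc, mul_assoc _ (w : MvPowerSeries (Fin d) ℤ_[p]), Units.mul_inv, mul_one,
        mul_comm, map_mul]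
    rw [h1, mul_add, add_mul, h2, hN, map_mul k (ev c * P.det), smul_smul, h4, smul_add, smul_smul,
      mul_smul_comm, smul_mul_assoc]
  choose X hX using hdvd
  have hs : k P.det * ψ c ≠ 0 := mul_ne_zero ((map_ne_zero_iff _ hk).2 hP)
    ((map_ne_zero_iff _ hψi).2 hc)
  have cancel : ∀ {s : MvPowerSeries (Fin d) ℤ_[p]} (_ : s ≠ 0) {M M' : Matrix (Fin r) (Fin r) (MvPowerSeries (Fin d) ℤ_[p])}, s • M = s • M' → M = M' :=
    fun {s} hs {M M'} h => smul_right_injective _ hs h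
  have hψs : ∀ (a : MvPowerSeries (Fin d) ℤ_[p]) M, ψM (a • M) = ψ a • ψM M := by
    intro a M
    ext i j
    simp [ψM]
  let F : R →+* Matrix (Fin r) (Fin r) (MvPowerSeries (Fin d) ℤ_[p]) :=
    { toFun := X
      map_one' := cancel hs (by
        rw [← hX, hB1, hψs, map_one]
        simp [hQP, smul_smul, mul_comm])
      map_zero' := cancel hs (by rw [← hX]; simp)
      map_add' := fun x y => cancel hs (by rw [← hX, smul_add, ← hX, ← hX]; simp [mul_add, add_mul])
      map_mul' := fun x y => cancel (mul_ne_zero hs hs) (by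
        have : ((k P.det * ψ c) * (k P.det * ψ c)) • (X x * X y) =
          (Qm * ψM (B x) * Pm) * (Qm * ψM (B y) * Pm) := by
          rw [hX, hX, Matrix.smul_mul, Matrix.mul_smul, smul_smul]
        rw [this]
        have h3 : (Qm * ψM (B x) * Pm) * (Qm * ψM (B y) * Pm) =
          Qm * ψM (B x) * (Pm * Qm) * ψM (B y) * Pm := by simp only [mul_assoc]
        rw [h3, hPQ, mul_smul_comm, mul_one, smul_mul_assoc, mul_assoc Qm, ← map_mul, hBm, hψs,
          mul_smul_comm, smul_smul, smul_mul_assoc, hX, smul_smul]) }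
  refine ⟨r, F, (injective_iff_map_eq_zero F).2 fun x hx => ?_⟩
  have hx : X x = 0 := hx
  have h0 : Qm * ψM (B x) * Pm = 0 := by rw [hX, hx, smul_zero]
  have h1 : (k P.det * k P.det) • ψM (B x) = 0 := by
    have : Pm * (Qm * ψM (B x) * Pm) * Qm = (Pm * Qm) * ψM (B x) * (Pm * Qm) := by
      simp only [mul_assoc]
    rw [h0, hPQ] at this
    simpa [smul_smul] using this.symm
  have hd : k P.det ≠ 0 := (map_ne_zero_iff _ hk).2 hP
  have h2 : ψM (B x) = 0 := cancel (mul_ne_zero hd hd) (by rw [h1, smul_zero])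
  have h3 : B x = 0 := by
    refine Matrix.ext fun i j => ?_
    apply hψi
    have := congrFun (congrFun h2 i) j
    simpa [ψM] using this
  exact hBi (by rw [h3, map_zero])

theorem dim_powerSeries_padic (p : ℕ) [Fact p.Prime] (d : ℕ) :
    ringKrullDim (MvPowerSeries (Fin d) ℤ_[p]) = (d + 1 : ℕ) := by
  induction d with
  | zero =>
    rw [ringKrullDim_eq_of_ringEquiv (MvPowerSeries.isEmptyEquiv (σ := Fin 0) (R := ℤ_[p])).toRingEquiv,
      IsPrincipalIdealRing.ringKrullDim_eq_one _ (IsDiscreteValuationRing.not_isField _)]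
    simp
  | succ d ih =>
    have hdom : IsDomain (MvPowerSeries (Fin d) ℤ_[p]) := NoZeroDivisors.to_isDomain _
    rw [ringKrullDim_eq_of_ringEquiv (MvPowerSeries.finSuccEquiv ℤ_[p] d).toRingEquiv]
    have hX : (PowerSeries.X : PowerSeries (MvPowerSeries (Fin d) ℤ_[p])) ∈
        IsLocalRing.maximalIdeal (PowerSeries (MvPowerSeries (Fin d) ℤ_[p])) := by
      rw [IsLocalRing.mem_maximalIdeal, mem_nonunits_iff]
      intro h
      have := h.map (PowerSeries.constantCoeff (R := MvPowerSeries (Fin d) ℤ_[p]))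
      simp at this
    have h := ringKrullDim_quotient_span_singleton_succ_eq_ringKrullDim_of_mem_nonZeroDivisors
      (mem_nonZeroDivisors_of_ne_zero PowerSeries.X_ne_zero) hX
    rw [← h]
    have hk : RingHom.ker (PowerSeries.constantCoeff (R := MvPowerSeries (Fin d) ℤ_[p])) =
        Ideal.span {PowerSeries.X} := by
      ext x
      rw [RingHom.mem_ker, Ideal.mem_span_singleton, PowerSeries.X_dvd_iff]
    have hs : Function.Surjective (PowerSeries.constantCoeff (R := MvPowerSeries (Fin d) ℤ_[p])) :=
      fun x => ⟨PowerSeries.C x, by simp⟩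
    rw [← hk, ringKrullDim_eq_of_ringEquiv (RingHom.quotientKerEquivOfSurjective hs), ih]
    rfl

theorem dim_le_of_finite {A R : Type} [CommRing A] [CommRing R] [Algebra A R] [Module.Finite A R] :
    ringKrullDim R ≤ ringKrullDim A := by
  have : Algebra.IsIntegral A R := Algebra.IsIntegral.of_finite A R
  refine Order.krullDim_le_of_strictMono (PrimeSpectrum.comap (algebraMap A R)) ?_
  intro P Q h
  exact Ideal.IsIntegral.comap_lt_comap (R := A) h

theorem injective_of_dim {A R : Type} [CommRing A] [IsDomain A] [CommRing R] (θ : A →+* R)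
    (hθ : θ.Finite) (N : ℕ) (hA : ringKrullDim A = N) (hR : ringKrullDim R = N) :
    Function.Injective θ := by
  rw [injective_iff_map_eq_zero]
  intro a ha
  by_contra h0
  have h1 := ringKrullDim_succ_le_of_surjective θ.rangeRestrict θ.rangeRestrict_surjective
    (mem_nonZeroDivisors_of_ne_zero h0) (Subtype.ext ha)
  have hf : Module.Finite θ.range R := by
    have : θ.range.subtype.Finite := by
      refine RingHom.Finite.of_comp_finite (f := θ.rangeRestrict) ?_
      exact hθ
    exact this
  have h2 := dim_le_of_finite (A := θ.range) (R := R)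
  rw [hA] at h1
  rw [hR] at h2
  have h3 : ((N : WithBot ℕ∞)) + 1 ≤ N := (add_le_add_left h2 1).trans h1
  have h4 : ((N + 1 : ℕ) : WithBot ℕ∞) ≤ (N : ℕ) := by exact_mod_cast h3
  have h5 : N + 1 ≤ N := by exact_mod_cast h4
  omega

theorem exists_padicHom (p : ℕ) [Fact p.Prime] {R : Type} [CommRing R] (I : Ideal R)
    [IsAdicComplete I R] (hp : (p : R) ∈ I) : Nonempty (ℤ_[p] →+* R) := by
  have hz : ∀ n, ((p ^ n : ℕ) : R ⧸ I ^ n) = 0 := by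
    intro n
    rw [← map_natCast (Ideal.Quotient.mk (I ^ n)), Ideal.Quotient.eq_zero_iff_mem]
    push_cast
    exact Ideal.pow_mem_pow hp n
  let g : ∀ n, ZMod (p ^ n) →+* R ⧸ I ^ n := fun n =>
    ZMod.castHom (m := ringChar (R ⧸ I ^ n)) (ringChar.dvd (hz n)) _
  refine ⟨IsAdicComplete.liftRingHom I (fun n => (g n).comp (PadicInt.toZModPow n)) ?_⟩
  intro m n hle
  rw [← PadicInt.zmod_cast_comp_toZModPow m n hle, ← RingHom.comp_assoc, ← RingHom.comp_assoc]
  congr 1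
  exact Subsingleton.elim _ _

theorem exists_params (p : ℕ) (R : Type) [CommRing R] [IsDomain R] [IsNoetherianRing R]
    [IsLocalRing R] (d : ℕ) (hdim : ringKrullDim R = (d + 1 : ℕ)) (hp0 : (p : R) ≠ 0)
    (hp : (p : R) ∈ IsLocalRing.maximalIdeal R) :
    ∃ x : Fin d → R, (∀ i, x i ∈ IsLocalRing.maximalIdeal R) ∧
      ∃ k, IsLocalRing.maximalIdeal R ^ k ≤ Ideal.span (Set.range x) ⊔ Ideal.span {(p : R)} := by
  have h := ringKrullDim_quotient_span_singleton_succ_eq_ringKrullDim_of_mem_nonZeroDivisors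
      (mem_nonZeroDivisors_of_ne_zero hp0) hp
  have hne : Ideal.span {(p : R)} ≠ ⊤ := fun h =>
    (IsLocalRing.maximalIdeal.isMaximal R).ne_top
      (top_le_iff.1 (h ▸ (Ideal.span_singleton_le_iff_mem _).2 hp))
  have : Nontrivial (R ⧸ Ideal.span {(p : R)}) := Ideal.Quotient.nontrivial_iff.2 hne
  set S := R ⧸ Ideal.span {(p : R)} with hS
  have hsurj : Function.Surjective (Ideal.Quotient.mk (Ideal.span {(p : R)})) :=
    Ideal.Quotient.mk_surjective
  have hloc : IsLocalRing S := IsLocalRing.of_surjective' _ hsurj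
  obtain ⟨s, hs, hcard⟩ :=
    Ideal.exists_finset_card_eq_height_of_isNoetherianRing (IsLocalRing.maximalIdeal S)
  have hcard' : s.card = d := by
    have h1 := IsLocalRing.maximalIdeal_height_eq_ringKrullDim (R := S)
    rw [← hcard] at h1
    rw [← h1, hdim] at h
    have h2 : ((s.card + 1 : ℕ) : WithBot ℕ∞) = ((d + 1 : ℕ) : WithBot ℕ∞) := by
      rw [← h]; rfl
    have h3 : s.card + 1 = d + 1 := by exact_mod_cast h2
    omega
  let e : Fin d ≃ s := (Fintype.equivFinOfCardEq (by simpa using hcard')).symm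
  choose l hl using hsurj
  let x : Fin d → R := fun i => l (e i)
  have hx : ∀ i, Ideal.Quotient.mk (Ideal.span {(p : R)}) (x i) = e i := fun i => hl _
  have hmem : ∀ y ∈ s, y ∈ IsLocalRing.maximalIdeal S := fun y hy =>
    hs.1.2 (Ideal.subset_span hy)
  refine ⟨x, fun i => ?_, ?_⟩
  · have h1 := hmem _ (e i).2
    rw [← hx, IsLocalRing.mem_maximalIdeal, mem_nonunits_iff] at h1
    rw [IsLocalRing.mem_maximalIdeal, mem_nonunits_iff]
    exact fun h => h1 (h.map _)
  · have hrad : IsLocalRing.maximalIdeal S ≤ (Ideal.span (s : Set S)).radical := by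
      rw [Ideal.radical_eq_sInf]
      refine le_sInf fun P hP => hs.2 ⟨hP.2, hP.1⟩ (IsLocalRing.le_maximalIdeal hP.2.ne_top)
    obtain ⟨k, hk⟩ := Ideal.exists_pow_le_of_le_radical_of_fg hrad (IsNoetherian.noetherian _)
    refine ⟨k, ?_⟩
    have hmap : Ideal.map (Ideal.Quotient.mk (Ideal.span {(p : R)})) (Ideal.span (Set.range x)) =
        Ideal.span (s : Set S) := by
      rw [Ideal.map_span]
      congr 1
      ext y
      constructor
      · rintro ⟨_, ⟨i, rfl⟩, rfl⟩
        rw [hx]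
        exact (e i).2
      · intro hy
        refine ⟨_, ⟨e.symm ⟨y, hy⟩, rfl⟩, ?_⟩
        rw [hx]
        simp
    have h1 := Ideal.comap_map_of_surjective' (Ideal.Quotient.mk (Ideal.span {(p : R)}))
      Ideal.Quotient.mk_surjective (Ideal.span (Set.range x))
    rw [Ideal.mk_ker, hmap] at h1
    rw [← h1, ← Ideal.map_le_iff_le_comap, Ideal.map_pow]
    refine (Ideal.pow_right_mono ?_ k).trans hk
    rw [Ideal.map_le_iff_le_comap]
    intro y hy
    rw [Ideal.mem_comap]
    have hlh := IsLocalHom.of_surjective (Ideal.Quotient.mk (Ideal.span {(p : R)}))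
      Ideal.Quotient.mk_surjective
    rw [IsLocalRing.mem_maximalIdeal, mem_nonunits_iff] at hy ⊢
    exact fun h => hy (isUnit_of_map_unit _ _ h)

open scoped MvPowerSeries.WithPiTopology

theorem exists_normalization (p : ℕ) [Fact p.Prime] (R : Type) [CommRing R] [IsNoetherianRing R]
    [IsLocalRing R] [IsAdicComplete (IsLocalRing.maximalIdeal R) R]
    [Finite (IsLocalRing.ResidueField R)]
    (hp : (p : R) ∈ IsLocalRing.maximalIdeal R) (d : ℕ) (x : Fin d → R)
    (hx : ∀ i, x i ∈ IsLocalRing.maximalIdeal R) (k : ℕ)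
    (hk : IsLocalRing.maximalIdeal R ^ k ≤ Ideal.span (Set.range x) ⊔ Ideal.span {(p : R)}) :
    ∃ θ : MvPowerSeries (Fin d) ℤ_[p] →+* R, θ.Finite := by
  classical
  set m := IsLocalRing.maximalIdeal R with hm
  obtain ⟨φ⟩ := exists_padicHom p m hp
  letI : WithIdeal R := ⟨m⟩
  have hadic : IsAdic m := rfl
  obtain ⟨hcomp, ht2⟩ := hadic.isAdicComplete_iff.1 inferInstance
  have hbasis : (nhds (0 : R)).HasBasis (fun _ : ℕ => True) (fun n => ((m ^ n : Ideal R) : Set R)) :=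
    m.hasBasis_nhds_zero_adic
  have hφ : Continuous φ := by
    refine continuous_of_continuousAt_zero φ ?_
    rw [ContinuousAt, map_zero, (padic_hasBasis p).tendsto_iff hbasis]
    refine fun n _ => ⟨n, trivial, fun y hy => ?_⟩
    obtain ⟨z, rfl⟩ := Ideal.mem_span_singleton.1 hy
    rw [map_mul, map_pow, map_natCast]
    exact Ideal.mul_mem_right _ _ (Ideal.pow_mem_pow hp n)
  have hE : MvPowerSeries.HasEval x :=
    hasEval_fin _ fun i => WithIdeal.isTopologicallyNilpotent_of_mem (hx i)
  let θ : MvPowerSeries (Fin d) ℤ_[p] →+* R := MvPowerSeries.eval₂Hom hφ hE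
  have hθ : ⇑θ = MvPowerSeries.eval₂ φ x := MvPowerSeries.coe_eval₂Hom hφ hE
  have hθc : Continuous θ := by
    rw [hθ]
    exact MvPowerSeries.continuous_eval₂ hφ hE
  have hθX : ∀ i, θ (MvPowerSeries.X i) = x i := fun i => by
    rw [hθ, MvPowerSeries.eval₂_X]
  have hθp : θ (p : MvPowerSeries (Fin d) ℤ_[p]) = p := map_natCast θ p
  refine ⟨θ, ?_⟩
  letI : Algebra (MvPowerSeries (Fin d) ℤ_[p]) R := θ.toAlgebra
  have hsm : ∀ (a : MvPowerSeries (Fin d) ℤ_[p]) (r : R), a • r = θ a * r := fun a r => rfl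
  let J : Ideal R := Ideal.span (Set.range x) ⊔ Ideal.span {(p : R)}
  have hfin : Finite (R ⧸ J) := by
    have : Finite (R ⧸ m) := inferInstanceAs (Finite (IsLocalRing.ResidueField R))
    have := Ideal.finite_quotient_pow (I := m) (IsNoetherian.noetherian _) k
    exact Finite.of_surjective _ (Ideal.Quotient.factor_surjective hk)
  have := Fintype.ofFinite (R ⧸ J)
  let v : R ⧸ J → R := Quotient.out
  have hv : ∀ y, Ideal.Quotient.mk J (v y) = y := fun y => Quotient.out_eq y
  let T : Submodule (MvPowerSeries (Fin d) ℤ_[p]) R := Submodule.span _ (Set.range v)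
  let I : Ideal (MvPowerSeries (Fin d) ℤ_[p]) :=
    Ideal.span (Set.range MvPowerSeries.X) ⊔ Ideal.span {(p : MvPowerSeries (Fin d) ℤ_[p])}
  have hIJ : J = I.map θ := by
    rw [Ideal.map_sup, Ideal.map_span, Ideal.map_span, Set.image_singleton, hθp, ← Set.range_comp,
      show (⇑θ ∘ MvPowerSeries.X) = x from funext hθX]
  have hIm : I.map θ ≤ m := by
    rw [← hIJ]
    refine sup_le (Ideal.span_le.2 ?_) ((Ideal.span_singleton_le_iff_mem _).2 hp)
    rintro _ ⟨i, rfl⟩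
    exact hx i
  have hIsm : ∀ n, ∀ r : R, r ∈ (I ^ n • (⊤ : Submodule (MvPowerSeries (Fin d) ℤ_[p]) R)) ↔
      r ∈ (I.map θ) ^ n := by
    intro n r
    have := Ideal.smul_top_eq_map (R := MvPowerSeries (Fin d) ℤ_[p]) (S := R) (I ^ n)
    rw [this, Ideal.map_pow]
    rfl
  have h1 : T ⊔ I • (⊤ : Submodule (MvPowerSeries (Fin d) ℤ_[p]) R) = ⊤ := by
    rw [eq_top_iff]
    rintro r -
    have h2 : r = v (Ideal.Quotient.mk J r) + (r - v (Ideal.Quotient.mk J r)) := by ring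
    rw [h2]
    refine Submodule.add_mem_sup (Submodule.subset_span ⟨_, rfl⟩) ?_
    rw [← pow_one I, hIsm, pow_one, ← hIJ, ← Ideal.Quotient.eq_zero_iff_mem, map_sub, hv, sub_self]
  have h2 : ∀ n, T ⊔ I ^ n • (⊤ : Submodule (MvPowerSeries (Fin d) ℤ_[p]) R) = ⊤ := by
    intro n
    induction n with
    | zero => rw [pow_zero, Ideal.one_eq_top, Submodule.top_smul, sup_top_eq]
    | succ n ih =>
      rw [eq_top_iff]
      conv_lhs => rw [← ih, ← h1, Submodule.smul_sup, ← Submodule.mul_smul, ← pow_succ]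
      refine sup_le le_sup_left (sup_le ?_ le_sup_right)
      exact Submodule.smul_le_right.trans le_sup_left
  have hcl : IsClosed (T : Set R) := by
    have hcpt : CompactSpace (MvPowerSeries (Fin d) ℤ_[p]) :=
      inferInstanceAs (CompactSpace ((Fin d →₀ ℕ) → ℤ_[p]))
    have hT : (T : Set R) = Set.range
        (fun f : (R ⧸ J) → MvPowerSeries (Fin d) ℤ_[p] => ∑ i, θ (f i) * v i) := by
      have := Fintype.range_linearCombination (MvPowerSeries (Fin d) ℤ_[p]) v
      change ((Submodule.span _ (Set.range v) : Submodule (MvPowerSeries (Fin d) ℤ_[p]) R) : Set R) = _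
      rw [← this]
      rfl
    rw [hT]
    refine (isCompact_range ?_).isClosed
    fun_prop
  have htop : T = ⊤ := by
    rw [eq_top_iff]
    rintro r -
    rw [← SetLike.mem_coe, ← hcl.closure_eq]
    have h3 : ∀ n, ∃ t ∈ T, t - r ∈ m ^ n := by
      intro n
      have : r ∈ T ⊔ I ^ n • (⊤ : Submodule (MvPowerSeries (Fin d) ℤ_[p]) R) := by
        rw [h2 n]; exact Submodule.mem_top
      obtain ⟨t, ht, s, hs, rfl⟩ := Submodule.mem_sup.1 this
      refine ⟨t, ht, ?_⟩
      rw [hIsm] at hs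
      rw [sub_add_cancel_left]
      exact neg_mem (Ideal.pow_right_mono hIm n hs)
    choose t ht hr using h3
    have hlim : Filter.Tendsto t Filter.atTop (nhds r) := by
      rw [← tendsto_sub_nhds_zero_iff, hbasis.tendsto_right_iff]
      intro n _
      filter_upwards [Filter.eventually_ge_atTop n] with l hl
      exact Ideal.pow_le_pow_right hl (hr l)
    exact mem_closure_of_tendsto hlim (Filter.Eventually.of_forall ht)
  exact ⟨htop ▸ Submodule.fg_span (Set.finite_range v)⟩

theorem linear_over_padic_power_series (p : ℕ) [Fact p.Prime]
    (R : Type) [CommRing R] [IsDomain R] [IsNoetherianRing R] [IsLocalRing R]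
    [IsAdicComplete (IsLocalRing.maximalIdeal R) R]
    [Finite (IsLocalRing.ResidueField R)] [CharP (IsLocalRing.ResidueField R) p]
    [CharZero R]
    (d : ℕ) (hdim : ringKrullDim R = (d + 1 : ℕ))
    (n : ℕ) (G : Subgroup (Matrix.GeneralLinearGroup (Fin n) R)) :
    ∃ (m : ℕ)
      (f : G →* Matrix.GeneralLinearGroup (Fin m) (MvPowerSeries (Fin d) (PadicInt p))),
      Function.Injective f := by
  have hp0 : (p : R) ≠ 0 := by exact_mod_cast (Fact.out : p.Prime).ne_zero
  have hp : (p : R) ∈ IsLocalRing.maximalIdeal R := by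
    rw [← IsLocalRing.residue_eq_zero_iff, map_natCast]
    exact CharP.cast_eq_zero _ p
  obtain ⟨x, hx, k, hk⟩ := exists_params p R d hdim hp0 hp
  obtain ⟨θ, hθ⟩ := exists_normalization p R hp d x hx k hk
  have hdom : IsDomain (MvPowerSeries (Fin d) ℤ_[p]) := NoZeroDivisors.to_isDomain _
  have hinj := injective_of_dim θ hθ (d + 1) (dim_powerSeries_padic p d) hdim
  letI : Algebra (MvPowerSeries (Fin d) ℤ_[p]) R := θ.toAlgebra
  haveI : Module.Finite (MvPowerSeries (Fin d) ℤ_[p]) R := hθ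
  obtain ⟨r, C, hC⟩ := exists_rep_powerSeries p d R hinj
  exact gl_embed r n C hC G
end

section
/- Let p be a prime and let R be a commutative Noetherian local pro-p domain of characteristic p whose Krull dimension equals a natural number d. Then for every natural number n and every subgroup G of GL_n(R) there exist a natural number m and an injective group homomorphism from G into GL_m(𝔽_p⟦t₁, …, t_d⟧), the general linear group over the power series ring in d variables over the field with p elements. -/
/-- the action of `R` on `Hom_A(R,B)` -/
noncomputable def dualAct (A B R : Type) [CommRing A] [CommRing B] [CommRing R] [Algebra A B]
    [Algebra A R] : R →+* Module.End B (R →ₗ[A] B) where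
  toFun r :=
    { toFun := fun φ => φ ∘ₗ LinearMap.mulLeft A r
      map_add' := fun _ _ => rfl
      map_smul' := fun _ _ => rfl }
  map_one' := by ext; simp
  map_mul' r s := by ext; simp [mul_left_comm]
  map_zero' := by ext; simp
  map_add' r s := by ext; simp [add_mul]

lemma exists_functional (A R : Type) [CommRing A] [IsDomain A] [CommRing R]
    [IsDomain R] [Algebra A R] [Module.Finite A R]
    (hAR : Function.Injective (algebraMap A R)) : ∃ φ : R →ₗ[A] A, φ 1 ≠ 0 := by
  classical
  let K := FractionRing A
  let L := FractionRing R
  have : FaithfulSMul A R := (faithfulSMul_iff_algebraMap_injective A R).mpr hAR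
  letI : Algebra K L := FractionRing.liftAlgebra A L
  have : IsScalarTower A K L := FractionRing.isScalarTower_liftAlgebra A L
  obtain ⟨g, hg⟩ := Module.Projective.exists_dual_ne_zero K (one_ne_zero : (1 : L) ≠ 0)
  let h : R →ₗ[A] K := (g.restrictScalars A) ∘ₗ (IsScalarTower.toAlgHom A R L).toLinearMap
  have h1 : h 1 ≠ 0 := by simpa [h] using hg
  obtain ⟨s, hs⟩ := (Module.Finite.fg_top : (⊤ : Submodule A R).FG)
  obtain ⟨c, hc⟩ := IsLocalization.exist_integer_multiples_of_finset (nonZeroDivisors A) (s.image h)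
  have hmem : ∀ x, (c : A) • h x ∈ LinearMap.range (Algebra.linearMap A K) := by
    intro x
    have hx : x ∈ Submodule.span A (s : Set R) := hs ▸ Submodule.mem_top
    induction hx using Submodule.span_induction with
    | mem x hx =>
      obtain ⟨a, ha⟩ := hc (h x) (Finset.mem_image_of_mem _ hx)
      exact ⟨a, ha⟩
    | zero => simp
    | add x y _ _ hx hy => rw [map_add, smul_add]; exact add_mem hx hy
    | smul a x _ hx => rw [map_smul, smul_comm]; exact Submodule.smul_mem _ _ hx
  have hinj : Function.Injective (Algebra.linearMap A K) := IsFractionRing.injective A K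
  let e := LinearEquiv.ofInjective (Algebra.linearMap A K) hinj
  refine ⟨e.symm.toLinearMap ∘ₗ (((c : A) • h).codRestrict _ hmem), ?_⟩
  intro h0
  have h2 := (LinearEquiv.map_eq_zero_iff e.symm).mp h0
  have h3 : (c : A) • h 1 = 0 := congrArg Subtype.val h2
  rcases smul_eq_zero.mp h3 with h4 | h4
  · exact nonZeroDivisors.ne_zero c.2 h4
  · exact h1 h4

lemma dualAct_injective (A B R : Type) [CommRing A] [IsDomain A] [CommRing B] [IsDomain B] [CommRing R]
    [IsDomain R] [Algebra A B] [Algebra A R] [Module.Finite A R]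
    (hAB : Function.Injective (algebraMap A B)) (hAR : Function.Injective (algebraMap A R)) :
    Function.Injective (dualAct A B R) := by
  rw [injective_iff_map_eq_zero]
  intro r hr
  by_contra hr0
  -- nonzero functional
  obtain ⟨φ, x, hx⟩ : ∃ (φ : R →ₗ[A] A) (x : R), φ x ≠ 0 := by
    obtain ⟨φ, h⟩ := exists_functional A R hAR
    exact ⟨φ, 1, h⟩
  obtain ⟨a, ha0, y, hy⟩ : ∃ a : A, a ≠ 0 ∧ ∃ y : R, r * y = algebraMap A R a := by
    have : IsAlgebraic A r :=
      ((Algebra.IsIntegral.of_finite A R).isIntegral r).isAlgebraic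
    obtain ⟨a, ha0, y, hy⟩ := this.exists_nonzero_dvd (mem_nonZeroDivisors_of_ne_zero hr0)
    exact ⟨a, ha0, y, hy.symm⟩
  let ψ : R →ₗ[A] B := (Algebra.linearMap A B) ∘ₗ φ
  have h := congrArg (fun (T : Module.End B (R →ₗ[A] B)) => T ψ (y * x)) hr
  simp only [dualAct, RingHom.coe_mk, MonoidHom.coe_mk, OneHom.coe_mk, LinearMap.coe_mk,
    AddHom.coe_mk, LinearMap.comp_apply, LinearMap.mulLeft_apply, ψ, ← mul_assoc, hy,
    LinearMap.zero_apply, ← Algebra.smul_def, map_smul] at h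
  rw [Algebra.linearMap_apply, Algebra.smul_def] at h
  rcases mul_eq_zero.mp h with h | h
  · exact ha0 (hAB (h.trans (map_zero _).symm))
  · exact hx (hAB (h.trans (map_zero _).symm))

lemma gl_embed_s15 (B R S : Type) [CommRing B] [CommRing R] [CommRing S] {N : Type} [AddCommGroup N]
    [Module B N] [Module.Free B N] [Module.Finite B N] (ρ : R →+* Module.End B N)
    (hρ : Function.Injective ρ) (ι : B →+* S) (hι : Function.Injective ι) (n : ℕ)
    (G : Subgroup (Matrix.GeneralLinearGroup (Fin n) R)) :
    ∃ (m : ℕ) (f : G →* Matrix.GeneralLinearGroup (Fin m) S), Function.Injective f := by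
  classical
  let b := Module.Free.chooseBasis B N
  let J := Module.Free.ChooseBasisIndex B N
  let σ : R →+* Matrix J J S :=
    (ι.mapMatrix).comp (((LinearMap.toMatrixAlgEquiv b).toRingEquiv : _ →+* Matrix J J B).comp ρ)
  have hσ : Function.Injective σ := by
    have h1 : Function.Injective (ι.mapMatrix (m := J)) := fun M N h => Matrix.map_injective hι h
    exact h1.comp ((LinearMap.toMatrixAlgEquiv b).injective.comp hρ)
  let e := Fintype.equivFin (Fin n × J)
  let τ : Matrix (Fin n) (Fin n) R →+* Matrix (Fin (Fintype.card (Fin n × J))) (Fin (Fintype.card (Fin n × J))) S :=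
    ((Matrix.reindexAlgEquiv S S e).toRingEquiv : Matrix (Fin n × J) (Fin n × J) S →+* _).comp
    (((Matrix.compRingEquiv (Fin n) J S) : Matrix (Fin n) (Fin n) (Matrix J J S) →+* _).comp σ.mapMatrix)
  have hτ : Function.Injective τ := by
    have h1 : Function.Injective (σ.mapMatrix (m := Fin n)) :=
      fun M N h => Matrix.map_injective hσ h
    exact (Matrix.reindexAlgEquiv S S e).injective.comp
      ((Matrix.compRingEquiv (Fin n) J S).injective.comp h1)
  refine ⟨_, (Units.map τ.toMonoidHom).comp G.subtype, ?_⟩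
  exact (Units.map_injective hτ).comp Subtype.val_injective


lemma exists_algInd (p : ℕ) [Fact p.Prime] (d : ℕ) :
    ∃ f : Fin d → PowerSeries (ZMod p), AlgebraicIndependent (ZMod p) f := by
  obtain ⟨s, hs⟩ := exists_isTranscendenceBasis (ZMod p) (PowerSeries (ZMod p))
  have hinf : s.Infinite := by
    intro hfin
    have := hfin.to_subtype
    have halg := hs.isAlgebraic
    have h1 := Algebra.IsAlgebraic.cardinalMk_le_max
      (Algebra.adjoin (ZMod p) (Set.range (Subtype.val : s → PowerSeries (ZMod p))))
      (PowerSeries (ZMod p))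
    have h2 : Countable (Algebra.adjoin (ZMod p)
        (Set.range (Subtype.val : s → PowerSeries (ZMod p)))) := by
      have : Countable (MvPolynomial s (ZMod p)) := by
        rw [← Cardinal.mk_le_aleph0_iff]
        exact MvPolynomial.cardinalMk_le_max.trans (by simp)
      exact hs.1.aevalEquiv.toEquiv.symm.injective.countable
    have h4 : Cardinal.mk (PowerSeries (ZMod p)) ≤ Cardinal.aleph0 :=
      h1.trans (max_le (Cardinal.mk_le_aleph0_iff.mpr h2) le_rfl)
    have h5 : Countable (PowerSeries (ZMod p)) := Cardinal.mk_le_aleph0_iff.mp h4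
    have h6 : Countable (Set ℕ) := by
      classical
      refine Function.Injective.countable
        (f := fun (S : Set ℕ) => (PowerSeries.mk fun n => if n ∈ S then (1 : ZMod p) else 0)) ?_
      intro S T h
      ext n
      have := congrArg (PowerSeries.coeff n) h
      simp only [PowerSeries.coeff_mk] at this
      by_cases h1 : n ∈ S <;> by_cases h2 : n ∈ T <;> simp_all
    have h7 := Cardinal.mk_le_aleph0_iff.mpr h6
    rw [Cardinal.mk_set, Cardinal.mk_nat] at h7
    exact (Cardinal.cantor _).not_ge h7
  have := hinf.to_subtype
  obtain ⟨e⟩ : Nonempty (Fin d ↪ s) := ⟨(Fin.valEmbedding).trans (Infinite.natEmbedding s)⟩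
  exact ⟨fun i => (e i : PowerSeries (ZMod p)), hs.1.comp e e.injective⟩

lemma exists_emb_two (p : ℕ) [Fact p.Prime] (d : ℕ) :
    ∃ φ : MvPowerSeries (Fin d) (ZMod p) →+* PowerSeries (PowerSeries (ZMod p)),
      Function.Injective φ := by
  classical
  obtain ⟨f, hf⟩ := exists_algInd p d
  let a : Fin d → MvPowerSeries Unit (PowerSeries (ZMod p)) :=
    fun i => (PowerSeries.monomial 1 (f i) : PowerSeries (PowerSeries (ZMod p)))
  have ha : MvPowerSeries.HasSubst a := by
    apply MvPowerSeries.hasSubst_of_constantCoeff_zero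
    intro i
    change PowerSeries.constantCoeff (PowerSeries.monomial 1 (f i)) = 0
    simp [PowerSeries.coeff_monomial, ← PowerSeries.coeff_zero_eq_constantCoeff_apply]
  refine ⟨(MvPowerSeries.substAlgHom (R := ZMod p) ha).toRingHom, ?_⟩
  rw [injective_iff_map_eq_zero]
  intro F hF
  have hF' : MvPowerSeries.subst a F = 0 := by
    rw [← MvPowerSeries.coe_substAlgHom ha]; exact hF
  have hprod : ∀ e : Fin d →₀ ℕ, (e.prod fun s e => (a s) ^ e) =
      (PowerSeries.monomial e.degree (e.prod fun s e => f s ^ e) :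
        PowerSeries (PowerSeries (ZMod p))) := by
    intro e
    have : ∀ (i : Fin d) (k : ℕ), (a i) ^ k = (PowerSeries.monomial k (f i ^ k)) := by
      intro i k
      change (PowerSeries.monomial 1 (f i)) ^ k = _
      rw [PowerSeries.monomial_pow]; simp
    simp only [this]
    rw [Finsupp.prod, Finsupp.prod, PowerSeries.prod_monomial]
    rfl
  ext e
  set n := e.degree
  have hfin : Set.Finite {d' : Fin d →₀ ℕ | d'.degree = n} := Finsupp.finite_of_degree_eq n
  have key := congrArg (MvPowerSeries.coeff (Finsupp.single () n)) hF'
  rw [MvPowerSeries.coeff_subst ha] at key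
  let P : MvPolynomial (Fin d) (ZMod p) :=
    ∑ d' ∈ hfin.toFinset, MvPolynomial.monomial d' (MvPowerSeries.coeff d' F)
  have hP : MvPolynomial.aeval f P = 0 := by
    rw [map_zero] at key
    rw [← key, finsum_eq_sum_of_support_subset (s := hfin.toFinset)]
    · simp only [P, map_sum, MvPolynomial.aeval_monomial]
      refine Finset.sum_congr rfl fun d' hd' => ?_
      rw [hprod]
      have : d'.degree = n := by simpa using hd'
      rw [this]
      change _ = _ • PowerSeries.coeff n (PowerSeries.monomial n _)
      rw [PowerSeries.coeff_monomial_same, Algebra.smul_def]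
    · intro d' hd'
      by_contra hne
      apply hd'
      beta_reduce
      rw [hprod]
      change _ • PowerSeries.coeff n (PowerSeries.monomial _ _) = 0
      rw [PowerSeries.coeff_monomial, if_neg, smul_zero]
      simpa [eq_comm] using hne
  have hP0 : P = 0 := (injective_iff_map_eq_zero _).mp hf P hP
  have := congrArg (MvPolynomial.coeff e) hP0
  simp only [P, MvPolynomial.coeff_sum, MvPolynomial.coeff_monomial, MvPolynomial.coeff_zero] at this
  rw [Finset.sum_ite_eq'] at this
  simpa [n] using this


lemma dual_finite (A B R : Type) [CommRing A] [CommRing B] [IsNoetherianRing B] [CommRing R]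
    [Algebra A B] [Algebra A R] [Module.Finite A R] : Module.Finite B (R →ₗ[A] B) := by
  obtain ⟨n, s, hs⟩ := Module.Finite.exists_fin (R := A) (M := R)
  let T : (R →ₗ[A] B) →ₗ[B] (Fin n → B) :=
    { toFun := fun φ i => φ (s i)
      map_add' := fun _ _ => rfl
      map_smul' := fun _ _ => rfl }
  refine Module.Finite.of_injective T ?_
  intro φ ψ h
  exact LinearMap.ext_on_range hs (fun i => congrFun h i)

lemma dual_torsionFree (A B R : Type) [CommRing A] [CommRing B] [IsDomain B] [CommRing R]
    [Algebra A B] [Algebra A R] : Module.IsTorsionFree B (R →ₗ[A] B) := by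
  infer_instance

lemma dual_free_pid (A B R : Type) [CommRing A] [CommRing B] [IsDomain B] [IsPrincipalIdealRing B]
    [CommRing R] [Algebra A B] [Algebra A R] [Module.Finite A R] :
    Module.Free B (R →ₗ[A] B) := by
  have := dual_finite A B R
  exact Module.free_of_finite_type_torsion_free'

lemma dual_free_ps (A C R : Type) [CommRing A] [CommRing C] [IsDomain C] [IsPrincipalIdealRing C]
    [IsLocalRing C]
    [CommRing R] [Algebra A (PowerSeries C)] [Algebra A R] [Module.Finite A R] :
    Module.Free (PowerSeries C) (R →ₗ[A] (PowerSeries C)) := by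
  have := dual_finite A (PowerSeries C) R
  let B := PowerSeries C
  let N := R →ₗ[A] (PowerSeries C)
  have hreg : IsSMulRegular N (PowerSeries.X : B) :=
    IsSMulRegular.of_ne_zero PowerSeries.X_ne_zero
  have hmem : (PowerSeries.X : B) ∈ (⊥ : Ideal B).jacobson := by
    rw [IsLocalRing.jacobson_eq_maximalIdeal _ bot_ne_top]
    rw [IsLocalRing.mem_maximalIdeal, mem_nonunits_iff, PowerSeries.isUnit_iff_constantCoeff]
    simp
  have : Module.FinitePresentation B N := Module.finitePresentation_of_finite _ _
  refine (Module.free_quotSMulTop_iff_free B N hmem hreg).mp ?_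
  let Q := B ⧸ Ideal.span {(PowerSeries.X : B)}
  have hprime : (Ideal.span {(PowerSeries.X : B)}).IsPrime := PowerSeries.span_X_isPrime
  have : IsDomain Q := Ideal.Quotient.isDomain _
  have hker : RingHom.ker (PowerSeries.constantCoeff (R := C)) = Ideal.span {(PowerSeries.X : B)} := by
    ext f
    rw [RingHom.mem_ker, Ideal.mem_span_singleton, PowerSeries.X_dvd_iff]
  let e : Q ≃+* C := (Ideal.quotEquivOfEq hker.symm).trans
    (RingHom.quotientKerEquivOfSurjective PowerSeries.constantCoeff_surj)
  have : IsPrincipalIdealRing Q := IsPrincipalIdealRing.of_surjective e.symm e.symm.surjective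
  have : Module.Finite Q (QuotSMulTop (PowerSeries.X : B) N) :=
    Module.Finite.of_restrictScalars_finite B _ _
  have : Module.IsTorsionFree Q (QuotSMulTop (PowerSeries.X : B) N) := by
    rw [Module.isTorsionFree_iff_smul_eq_zero]
    intro q x h
    obtain ⟨b, rfl⟩ := Ideal.Quotient.mk_surjective q
    obtain ⟨n, rfl⟩ := Submodule.Quotient.mk_surjective _ x
    have h1 : (Submodule.Quotient.mk (b • n) :
        QuotSMulTop (PowerSeries.X : B) N) = 0 := h
    rw [Submodule.Quotient.mk_eq_zero, Submodule.mem_smul_pointwise_iff_exists] at h1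
    obtain ⟨n', -, hn'⟩ := h1
    have hdvd : ∀ r, (PowerSeries.X : B) ∣ b * n r := fun r =>
      ⟨n' r, (LinearMap.congr_fun hn' r).symm⟩
    by_cases hb : (PowerSeries.X : B) ∣ b
    · left
      rw [Ideal.Quotient.eq_zero_iff_mem, Ideal.mem_span_singleton]
      exact hb
    · right
      have h2 : ∀ r, ∃ c : B, n r = PowerSeries.X * c := fun r =>
        (PowerSeries.X_prime.dvd_or_dvd (hdvd r)).resolve_left hb
      choose g hg using h2
      have hX : (PowerSeries.X : B) ≠ 0 := PowerSeries.X_ne_zero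
      rw [Submodule.Quotient.mk_eq_zero, Submodule.mem_smul_pointwise_iff_exists]
      refine ⟨{ toFun := g, map_add' := fun x y => ?_, map_smul' := fun a x => ?_ }, trivial, ?_⟩
      · apply mul_left_cancel₀ hX
        rw [mul_add, ← hg, ← hg, ← hg, map_add]
      · apply mul_left_cancel₀ hX
        rw [RingHom.id_apply, mul_smul_comm, ← hg, ← hg, map_smul]
      · ext1 r
        exact (hg r).symm
  exact Module.free_of_finite_type_torsion_free'



lemma isPrecomplete_pi (A : Type) [CommRing A] (I : Ideal A) [IsPrecomplete I A] (k : ℕ) :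
    IsPrecomplete I (Fin k → A) := by
  have key : ∀ n (f : Fin k → A), f ∈ (I ^ n • ⊤ : Submodule A (Fin k → A)) ↔ ∀ i, f i ∈ I ^ n := by
    intro n f
    constructor
    · intro h i
      have := Submodule.mem_map_of_mem (f := LinearMap.proj (R := A) (φ := fun _ : Fin k => A) i) h
      rw [Submodule.map_smul''] at this
      have h2 := Submodule.smul_mono (le_refl (I ^ n)) (le_top : _ ≤ (⊤ : Submodule A A)) this
      simpa using h2
    · intro h
      rw [← Finset.univ_sum_single f]
      refine Submodule.sum_mem _ fun i _ => ?_
      have : Pi.single i (f i) = f i • (Pi.single i 1 : Fin k → A) := by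
        rw [← Pi.single_smul]; simp
      rw [this]
      exact Submodule.smul_mem_smul (h i) trivial
  constructor
  intro f hf
  have : ∀ i, ∃ L : A, ∀ n, f n i ≡ L [SMOD (I ^ n • ⊤ : Submodule A A)] := by
    intro i
    apply IsPrecomplete.prec ‹_›
    intro m n hmn
    have := hf hmn
    rw [SModEq.sub_mem, key] at this
    rw [SModEq.sub_mem]
    simpa using this i
  choose L hL using this
  refine ⟨L, fun n => ?_⟩
  rw [SModEq.sub_mem, key]
  intro i
  have := hL i n
  rw [SModEq.sub_mem] at this
  simpa using this

lemma exists_eval (p : ℕ) [Fact p.Prime] (R : Type) [CommRing R] [IsLocalRing R]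
    [IsAdicComplete (IsLocalRing.maximalIdeal R) R] [CharP R p] (d : ℕ) (x : Fin d → R)
    (hx : ∀ i, x i ∈ IsLocalRing.maximalIdeal R) :
    ∃ φ : MvPowerSeries (Fin d) (ZMod p) →+* R, ∀ i, φ (MvPowerSeries.X i) = x i := by
  letI : Algebra (ZMod p) R := ZMod.algebra R p
  letI : WithIdeal R := ⟨IsLocalRing.maximalIdeal R⟩
  letI : UniformSpace (ZMod p) := ⊥
  have : DiscreteUniformity (ZMod p) := ⟨rfl⟩
  have hadic : IsAdic (IsLocalRing.maximalIdeal R) := rfl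
  obtain ⟨h1, h2⟩ := hadic.isAdicComplete_iff.mp inferInstance
  have : ContinuousSMul (ZMod p) R := by
    refine ⟨?_⟩
    simp only [Algebra.smul_def]
    exact (continuous_of_discreteTopology.comp continuous_fst).mul continuous_snd
  have hE : MvPowerSeries.HasEval x := by
    refine ⟨fun i => ?_, by simp [Filter.cofinite_eq_bot]⟩
    rw [IsTopologicallyNilpotent, hadic.hasBasis_nhds_zero.tendsto_right_iff]
    intro n _
    filter_upwards [Filter.eventually_ge_atTop n] with m hm
    exact Ideal.pow_le_pow_right hm (Ideal.pow_mem_pow (hx i) m)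
  refine ⟨(MvPowerSeries.aeval (R := ZMod p) hE).toRingHom, fun i => ?_⟩
  have := MvPowerSeries.aeval_coe (R := ZMod p) hE (MvPolynomial.X i)
  simpa using this

lemma finite_of_quot (A R : Type) [CommRing A] [CommRing R] [Algebra A R] (I : Ideal A)
    [IsPrecomplete I A] [IsHausdorff I R] (hf : Finite (R ⧸ I.map (algebraMap A R))) :
    Module.Finite A R := by
  classical
  cases nonempty_fintype (R ⧸ I.map (algebraMap A R))
  let k := Fintype.card (R ⧸ I.map (algebraMap A R))
  let e := Fintype.equivFin (R ⧸ I.map (algebraMap A R))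
  let g : Fin k → R := fun i => (Ideal.Quotient.mk_surjective (e.symm i)).choose
  have hg : ∀ i, Ideal.Quotient.mk _ (g i) = e.symm i :=
    fun i => (Ideal.Quotient.mk_surjective (e.symm i)).choose_spec
  have := isPrecomplete_pi A I k
  let f : (Fin k → A) →ₗ[A] R := Fintype.linearCombination A g
  have hs : Function.Surjective f := by
    apply surjective_of_mkQ_comp_surjective (I := I)
    intro y
    obtain ⟨r, rfl⟩ := Submodule.mkQ_surjective _ y
    refine ⟨Pi.single (e (Ideal.Quotient.mk _ r)) 1, ?_⟩
    have h1 : f (Pi.single (e (Ideal.Quotient.mk _ r)) 1) = g (e (Ideal.Quotient.mk _ r)) := by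
      simp [f, Fintype.linearCombination_apply_single]
    rw [LinearMap.comp_apply, h1]
    have h2 := hg (e (Ideal.Quotient.mk _ r))
    rw [Equiv.symm_apply_apply, Ideal.Quotient.eq] at h2
    rw [Submodule.mkQ_apply, Submodule.mkQ_apply, Submodule.Quotient.eq, Ideal.smul_top_eq_map]
    exact h2
  exact Module.Finite.of_surjective f hs

lemma dim_mvps (K : Type) [Field K] (n : ℕ) :
    ringKrullDim (MvPowerSeries (Fin n) K) ≤ n := by
  induction n with
  | zero =>
    rw [ringKrullDim_eq_of_ringEquiv (MvPowerSeries.isEmptyEquiv (Fin 0) K).toRingEquiv,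
      ringKrullDim_eq_zero_of_field]
    simp
  | succ n ih =>
    rw [ringKrullDim_eq_of_ringEquiv (MvPowerSeries.finSuccEquiv K n).toRingEquiv]
    let C := MvPowerSeries (Fin n) K
    have hker : RingHom.ker (PowerSeries.constantCoeff (R := C)) =
        Ideal.span {(PowerSeries.X : PowerSeries C)} := by
      ext f
      rw [RingHom.mem_ker, Ideal.mem_span_singleton, PowerSeries.X_dvd_iff]
    let e : (PowerSeries C ⧸ Ideal.span {(PowerSeries.X : PowerSeries C)}) ≃+* C :=
      (Ideal.quotEquivOfEq hker.symm).trans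
      (RingHom.quotientKerEquivOfSurjective PowerSeries.constantCoeff_surj)
    have hX : (PowerSeries.X : PowerSeries C) ∈ IsLocalRing.maximalIdeal (PowerSeries C) := by
      rw [IsLocalRing.mem_maximalIdeal, mem_nonunits_iff, PowerSeries.isUnit_iff_constantCoeff]
      simp
    have h := Ideal.height_le_ringKrullDim_quotient_add_one hX
    rw [IsLocalRing.maximalIdeal_height_eq_ringKrullDim, ringKrullDim_eq_of_ringEquiv e] at h
    refine h.trans ?_
    push_cast
    gcongr

lemma dim_le_of_integral (A R : Type) [CommRing A] [CommRing R] [Algebra A R]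
    [Algebra.IsIntegral A R] : ringKrullDim R ≤ ringKrullDim A := by
  refine Order.krullDim_le_of_strictMono (PrimeSpectrum.comap (algebraMap A R)) ?_
  intro P Q h
  exact Ideal.IsIntegral.comap_lt_comap (R := A) h

lemma inj_of_dim (p : ℕ) [Fact p.Prime] (R : Type) [CommRing R] (d : ℕ)
    [Algebra (MvPowerSeries (Fin d) (ZMod p)) R] [Module.Finite (MvPowerSeries (Fin d) (ZMod p)) R]
    (hdim : ringKrullDim R = (d : ℕ)) :
    Function.Injective (algebraMap (MvPowerSeries (Fin d) (ZMod p)) R) := by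
  let A := MvPowerSeries (Fin d) (ZMod p)
  rw [injective_iff_map_eq_zero]
  intro f hf
  by_contra hf0
  have h1 := ringKrullDim_quotient_succ_le_of_nonZeroDivisor (mem_nonZeroDivisors_of_ne_zero hf0)
  have h2 := h1.trans (dim_mvps (ZMod p) d)
  let g : A ⧸ Ideal.span {f} →+* R := Ideal.Quotient.lift _ (algebraMap A R) (by
    intro a ha
    obtain ⟨c, rfl⟩ := Ideal.mem_span_singleton.mp ha
    rw [map_mul, hf, zero_mul])
  letI : Algebra (A ⧸ Ideal.span {f}) R := g.toAlgebra
  have hgc : g.comp (Ideal.Quotient.mk (Ideal.span {f})) = algebraMap A R := by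
    ext a
    simp [g]
  have hfin : (algebraMap A R).Finite := RingHom.finite_algebraMap.mpr inferInstance
  have hgf : g.Finite := RingHom.Finite.of_comp_finite (hgc ▸ hfin)
  have : Module.Finite (A ⧸ Ideal.span {f}) R := hgf
  have h3 := dim_le_of_integral (A ⧸ Ideal.span {f}) R
  rw [hdim] at h3
  have h4 : ((d : ℕ) : WithBot ℕ∞) + 1 ≤ d := le_trans (by gcongr) h2
  have h5 : d + 1 ≤ d := by exact_mod_cast h4
  omega

lemma exists_norm (p : ℕ) [Fact p.Prime]
    (R : Type) [CommRing R] [IsDomain R] [IsNoetherianRing R] [IsLocalRing R]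
    [IsAdicComplete (IsLocalRing.maximalIdeal R) R]
    [Finite (IsLocalRing.ResidueField R)] [CharP R p]
    (d : ℕ) (hdim : ringKrullDim R = (d : ℕ)) :
    ∃ φ : MvPowerSeries (Fin d) (ZMod p) →+* R, Function.Injective φ ∧ φ.Finite := by
  let m := IsLocalRing.maximalIdeal R
  obtain ⟨s, hs, hcard⟩ := Ideal.exists_finset_card_eq_height_of_isNoetherianRing m
  have hd : s.card = d := by
    rw [← IsLocalRing.maximalIdeal_height_eq_ringKrullDim, ← hcard] at hdim
    exact_mod_cast hdim
  let e := s.equivFinOfCardEq hd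
  let x : Fin d → R := fun i => (e.symm i : R)
  have hxs : Set.range x = (s : Set R) := by
    ext r
    constructor
    · rintro ⟨i, rfl⟩
      exact (e.symm i).2
    · intro hr
      exact ⟨e ⟨r, hr⟩, by simp [x]⟩
  have hsm : Ideal.span (s : Set R) ≤ m := hs.1.2
  have hx : ∀ i, x i ∈ m := fun i => hsm (Ideal.subset_span (hxs ▸ Set.mem_range_self i))
  obtain ⟨φ, hφ⟩ := exists_eval p R d x hx
  letI : Algebra (MvPowerSeries (Fin d) (ZMod p)) R := φ.toAlgebra
  let I : Ideal (MvPowerSeries (Fin d) (ZMod p)) := Ideal.span (Set.range MvPowerSeries.X)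
  have hI : I.map (algebraMap (MvPowerSeries (Fin d) (ZMod p)) R) = Ideal.span (s : Set R) := by
    rw [Ideal.map_span, ← Set.range_comp, ← hxs]
    congr 2
    ext i
    exact hφ i
  have : IsHausdorff I R := IsHausdorff.of_map (J := m) (hI.trans_le hsm)
  have hrad : m ≤ (Ideal.span (s : Set R)).radical := by
    rw [Ideal.radical_eq_sInf]
    refine le_sInf fun P hP => ?_
    have hP' := hP.2
    exact hs.2 ⟨hP.2, hP.1⟩ (IsLocalRing.le_maximalIdeal hP.2.ne_top)
  obtain ⟨k, hk⟩ := Ideal.exists_pow_le_of_le_radical_of_fg hrad (IsNoetherian.noetherian _)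
  have : Finite (R ⧸ m) := ‹Finite (IsLocalRing.ResidueField R)›
  have : Finite (R ⧸ m ^ k) := Ideal.finite_quotient_pow (IsNoetherian.noetherian _) k
  have hfin : Finite (R ⧸ I.map (algebraMap (MvPowerSeries (Fin d) (ZMod p)) R)) := by
    rw [hI]
    exact Finite.of_surjective _ (Ideal.Quotient.factor_surjective hk)
  have : Module.Finite (MvPowerSeries (Fin d) (ZMod p)) R := finite_of_quot _ R I hfin
  exact ⟨φ, inj_of_dim p R d hdim, this⟩

lemma finish_aux (p : ℕ) [Fact p.Prime]
    (R : Type) [CommRing R] [IsDomain R] (d : ℕ)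
    [Algebra (MvPowerSeries (Fin d) (ZMod p)) R]
    (hφ : Function.Injective (algebraMap (MvPowerSeries (Fin d) (ZMod p)) R))
    [Module.Finite (MvPowerSeries (Fin d) (ZMod p)) R]
    (n : ℕ) (G : Subgroup (Matrix.GeneralLinearGroup (Fin n) R))
    (B : Type) [CommRing B] [IsDomain B] [IsNoetherianRing B]
    [Algebra (MvPowerSeries (Fin d) (ZMod p)) B]
    (hB : Function.Injective (algebraMap (MvPowerSeries (Fin d) (ZMod p)) B))
    (hfree : Module.Free B (R →ₗ[MvPowerSeries (Fin d) (ZMod p)] B))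
    (ι : B →+* MvPowerSeries (Fin d) (ZMod p)) (hι : Function.Injective ι) :
    ∃ (m : ℕ)
      (f : G →* Matrix.GeneralLinearGroup (Fin m) (MvPowerSeries (Fin d) (ZMod p))),
      Function.Injective f := by
  have : IsDomain (MvPowerSeries (Fin d) (ZMod p)) := NoZeroDivisors.to_isDomain _
  have := dual_finite (MvPowerSeries (Fin d) (ZMod p)) B R
  exact gl_embed_s15 B R _ (dualAct (MvPowerSeries (Fin d) (ZMod p)) B R)
    (dualAct_injective _ B R hB hφ) ι hι n G

lemma finish (p : ℕ) [Fact p.Prime]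
    (R : Type) [CommRing R] [IsDomain R] (d : ℕ)
    (φ : MvPowerSeries (Fin d) (ZMod p) →+* R) (hφ : Function.Injective φ) (hφf : φ.Finite)
    (n : ℕ) (G : Subgroup (Matrix.GeneralLinearGroup (Fin n) R)) :
    ∃ (m : ℕ)
      (f : G →* Matrix.GeneralLinearGroup (Fin m) (MvPowerSeries (Fin d) (ZMod p))),
      Function.Injective f := by
  let E0 : MvPowerSeries (Fin 0) (ZMod p) ≃+* ZMod p :=
    (MvPowerSeries.isEmptyEquiv (Fin 0) (ZMod p)).toRingEquiv
  let E1 : MvPowerSeries (Fin 1) (ZMod p) ≃+* PowerSeries (ZMod p) :=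
    (MvPowerSeries.renameEquiv (ZMod p) (Equiv.ofUnique (Fin 1) Unit)).toRingEquiv
  rcases d with _ | _ | d
  · let _ : Algebra (MvPowerSeries (Fin 0) (ZMod p)) R := φ.toAlgebra
    have hfin : Module.Finite (MvPowerSeries (Fin 0) (ZMod p)) R := hφf
    let _ : Algebra (MvPowerSeries (Fin 0) (ZMod p)) (ZMod p) := E0.toRingHom.toAlgebra
    exact finish_aux p R 0 hφ n G (ZMod p) E0.injective (dual_free_pid _ _ _) E0.symm.toRingHom
      E0.symm.injective
  · let _ : Algebra (MvPowerSeries (Fin 1) (ZMod p)) R := φ.toAlgebra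
    have hfin : Module.Finite (MvPowerSeries (Fin 1) (ZMod p)) R := hφf
    let _ : Algebra (MvPowerSeries (Fin 1) (ZMod p)) (PowerSeries (ZMod p)) :=
      E1.toRingHom.toAlgebra
    exact finish_aux p R 1 hφ n G (PowerSeries (ZMod p)) E1.injective (dual_free_pid _ _ _)
      E1.symm.toRingHom E1.symm.injective
  · let _ : Algebra (MvPowerSeries (Fin (d + 2)) (ZMod p)) R := φ.toAlgebra
    have hfin : Module.Finite (MvPowerSeries (Fin (d + 2)) (ZMod p)) R := hφf
    obtain ⟨ψ, hψ⟩ := exists_emb_two p (d + 2)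
    let _ : Algebra (MvPowerSeries (Fin (d + 2)) (ZMod p)) (PowerSeries (PowerSeries (ZMod p))) :=
      ψ.toAlgebra
    let j : PowerSeries (PowerSeries (ZMod p)) →+* PowerSeries (MvPowerSeries (Fin 1) (ZMod p)) :=
      PowerSeries.map E1.symm.toRingHom
    have hj : Function.Injective j := PowerSeries.map_injective _ E1.symm.injective
    let E2 := (MvPowerSeries.finSuccEquiv (ZMod p) 1).toRingEquiv
    let r := MvPowerSeries.rename (R := ZMod p) (Fin.castLEEmb (show 2 ≤ d + 2 by omega))
    have hr : Function.Injective r := MvPowerSeries.rename_injective _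
    exact finish_aux p R (d + 2) hφ n G (PowerSeries (PowerSeries (ZMod p))) hψ
      (dual_free_ps _ _ _)
      (r.toRingHom.comp (E2.symm.toRingHom.comp j)) (hr.comp (E2.symm.injective.comp hj))

theorem linear_over_finite_field_power_series (p : ℕ) [Fact p.Prime]
    (R : Type) [CommRing R] [IsDomain R] [IsNoetherianRing R] [IsLocalRing R]
    [IsAdicComplete (IsLocalRing.maximalIdeal R) R]
    [Finite (IsLocalRing.ResidueField R)] [CharP (IsLocalRing.ResidueField R) p]
    [CharP R p]
    (d : ℕ) (hdim : ringKrullDim R = (d : ℕ))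
    (n : ℕ) (G : Subgroup (Matrix.GeneralLinearGroup (Fin n) R)) :
    ∃ (m : ℕ)
      (f : G →* Matrix.GeneralLinearGroup (Fin m) (MvPowerSeries (Fin d) (ZMod p))),
      Function.Injective f := by
  obtain ⟨φ, h1, h2⟩ := exists_norm p R d hdim
  exact finish p R d φ h1 h2 n G
end

section
/- Let p be a prime and let S be a commutative Noetherian local pro-p domain of characteristic zero with Krull dimension strictly greater than 2. Then there exists an injective ring homomorphism from ℤ_p⟦s₁, s₂⟧, the power series ring in two variables over the p-adic integers, into S. -/
open IsLocalRing in
/-- The structure map from the `p`-adic integers to a complete local ring containing `p` in its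
maximal ideal. -/
theorem aux_exists_padic_hom (p : ℕ) [Fact p.Prime] {S : Type} [CommRing S] (I : Ideal S)
    [IsAdicComplete I S] (hp : (p : S) ∈ I) : Nonempty (PadicInt p →+* S) := by
  have hd : ∀ n, ringChar (S ⧸ I ^ n) ∣ p ^ n := by
    intro n
    apply ringChar.dvd
    have : ((p ^ n : ℕ) : S ⧸ I ^ n) = Ideal.Quotient.mk (I ^ n) ((p : S) ^ n) := by simp
    rw [this, Ideal.Quotient.eq_zero_iff_mem]
    exact Ideal.pow_mem_pow hp n
  refine ⟨IsAdicComplete.liftRingHom I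
    (fun n => (ZMod.castHom (hd n) (S ⧸ I ^ n)).comp (PadicInt.toZModPow n)) ?_⟩
  intro m n h
  rw [← PadicInt.zmod_cast_comp_toZModPow m n h, ← RingHom.comp_assoc, ← RingHom.comp_assoc]
  congr 1
  exact Subsingleton.elim _ _

/-- Evaluation of power series at elements of the ideal of definition. -/
theorem aux_exists_eval {R S : Type} [CommRing R] [CommRing S] (I : Ideal S)
    [IsAdicComplete I S] (φ : R →+* S) (a : Fin 2 → S) (ha : ∀ i, a i ∈ I) :
    ∃ f : MvPowerSeries (Fin 2) R →+* S, ∀ i, f (MvPowerSeries.X i) = a i := by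
  let : WithIdeal S := ⟨I⟩
  let : UniformSpace R := ⊥
  have : DiscreteUniformity R := ⟨rfl⟩
  have hI : IsAdic I := rfl
  obtain ⟨h1, h2⟩ := hI.isAdicComplete_iff.1 inferInstance
  have hφ : Continuous φ := continuous_of_discreteTopology
  have hev : MvPowerSeries.HasEval a := by
    refine ⟨fun s => ?_, by simp⟩
    rw [IsTopologicallyNilpotent, hI.hasBasis_nhds_zero.tendsto_right_iff]
    intro n _
    filter_upwards [Filter.eventually_ge_atTop n] with k hk
    exact Ideal.pow_le_pow_right hk (Ideal.pow_mem_pow (ha s) k)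
  refine ⟨MvPowerSeries.eval₂Hom hφ hev, fun i => ?_⟩
  rw [MvPowerSeries.coe_eval₂Hom, MvPowerSeries.eval₂_X]

/-- Splitting off a power of a variable. -/
theorem aux_split {R : Type} [CommRing R] (f : MvPowerSeries (Fin 2) R) (s : Fin 2) (k : ℕ) :
    ∃ g r : MvPowerSeries (Fin 2) R, f = MvPowerSeries.X s ^ k * g + r ∧
      (∀ m, MvPowerSeries.coeff m g = MvPowerSeries.coeff (Finsupp.single s k + m) f) ∧
      (∀ m, MvPowerSeries.coeff m r = if m s < k then MvPowerSeries.coeff m f else 0) := by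
  let r : MvPowerSeries (Fin 2) R := fun m => if m s < k then MvPowerSeries.coeff m f else 0
  have hr : ∀ m, MvPowerSeries.coeff m r = if m s < k then MvPowerSeries.coeff m f else 0 :=
    fun m => rfl
  have hdvd : MvPowerSeries.X s ^ k ∣ f - r := by
    rw [MvPowerSeries.X_pow_dvd_iff]
    intro m hm
    rw [map_sub, hr, if_pos hm, sub_self]
  obtain ⟨g, hg⟩ := hdvd
  have hf : f = MvPowerSeries.X s ^ k * g + r := by rw [← hg]; ring
  refine ⟨g, r, hf, fun m => ?_, hr⟩
  have h := congrArg (MvPowerSeries.coeff (Finsupp.single s k + m)) hg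
  rw [MvPowerSeries.X_pow_eq, MvPowerSeries.coeff_add_monomial_mul, map_sub, hr, if_neg (by simp),
    one_mul, sub_zero] at h
  exact h.symm

theorem aux_C_dvd {R : Type} [CommRing R] (f : MvPowerSeries (Fin 2) R) (c : R)
    (h : ∀ m, c ∣ MvPowerSeries.coeff m f) : MvPowerSeries.C c ∣ f := by
  choose g hg using h
  let G : MvPowerSeries (Fin 2) R := fun m => g m
  refine ⟨G, ?_⟩
  ext m
  rw [MvPowerSeries.coeff_C_mul, hg m]
  rfl

theorem aux_dim {S : Type} [CommRing S] [IsNoetherianRing S] [IsLocalRing S] (q : S)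
    (hq : q ∈ IsLocalRing.maximalIdeal S) (hS : 2 < ringKrullDim S) :
    ∃ (Q : Fin 3 → Ideal S), (∀ i, (Q i).IsPrime) ∧ q ∈ Q 0 ∧ Q 0 < Q 1 ∧ Q 1 < Q 2 := by
  have h := ringKrullDim_le_ringKrullDim_quotient_add_card ({q} : Finset S) (by
    simpa [IsLocalRing.ringJacobson_eq_maximalIdeal] using hq)
  have h2 : ((2 : ℕ) : WithBot ℕ∞) ≤ ringKrullDim (S ⧸ Ideal.span ((({q} : Finset S)) : Set S)) := by
    by_contra hc
    rw [not_le] at hc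
    have hle : ringKrullDim (S ⧸ Ideal.span ((({q} : Finset S)) : Set S)) ≤ 1 :=
      Order.le_of_lt_succ (by simpa using! hc)
    have h3 := h.trans (add_le_add_left hle _)
    rw [Finset.card_singleton] at h3
    have h4 := hS.trans_le h3
    norm_num at h4
  obtain ⟨l, hl⟩ := Order.le_krullDim_iff.1 h2
  let π := Ideal.Quotient.mk (Ideal.span ((({q} : Finset S)) : Set S))
  let L : Fin 3 → PrimeSpectrum (S ⧸ Ideal.span ((({q} : Finset S)) : Set S)) :=
    fun i => l (Fin.cast (by omega) i)
  have hL : ∀ i j, i < j → (L i).asIdeal < (L j).asIdeal := by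
    intro i j hij
    exact l.strictMono (by simpa using! hij)
  have hmono : ∀ i j, i < j → (L i).asIdeal.comap π < (L j).asIdeal.comap π := by
    intro i j hij
    have hsurj : Function.Surjective π := Ideal.Quotient.mk_surjective
    rw [lt_iff_le_not_ge, Ideal.comap_le_comap_iff_of_surjective π hsurj,
      Ideal.comap_le_comap_iff_of_surjective π hsurj, ← lt_iff_le_not_ge]
    exact hL i j hij
  refine ⟨fun i => (L i).asIdeal.comap π, fun i => inferInstance, ?_, hmono _ _ (by decide),
    hmono _ _ (by decide)⟩
  have : π q = 0 := Ideal.Quotient.eq_zero_iff_mem.2 (Ideal.subset_span (by simp))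
  simp [this]

/-- Every commutative Noetherian local pro-`p` domain of characteristic
zero and Krull dimension `> 2` contains a copy of `ℤ_p⟦s₁, s₂⟧`: there is an injective
ring homomorphism `ℤ_p⟦s₁, s₂⟧ → S`. -/
theorem exists_embedding_padic_power_series_two_vars (p : ℕ) [Fact p.Prime]
    (S : Type) [CommRing S] [IsDomain S] [IsNoetherianRing S] [IsLocalRing S]
    [IsAdicComplete (IsLocalRing.maximalIdeal S) S]
    [Finite (IsLocalRing.ResidueField S)] [CharP (IsLocalRing.ResidueField S) p]
    [CharZero S]
    (hS : 2 < ringKrullDim S) :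
    ∃ f : MvPowerSeries (Fin 2) (PadicInt p) →+* S, Function.Injective f := by
  have hp : (p : S) ∈ IsLocalRing.maximalIdeal S := by
    rw [← IsLocalRing.residue_eq_zero_iff, map_natCast, CharP.cast_eq_zero]
  obtain ⟨Q, hQ, hpQ, h01, h12⟩ := aux_dim (p : S) hp hS
  obtain ⟨x, hx1, hx0⟩ := SetLike.exists_of_lt h01
  obtain ⟨y, hy2, hy1⟩ := SetLike.exists_of_lt h12
  have hle : ∀ i, Q i ≤ IsLocalRing.maximalIdeal S :=
    fun i => IsLocalRing.le_maximalIdeal (hQ i).ne_top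
  obtain ⟨ψ⟩ := aux_exists_padic_hom p (IsLocalRing.maximalIdeal S) hp
  obtain ⟨φ, hφ⟩ := aux_exists_eval (IsLocalRing.maximalIdeal S) ψ ![x, y] (by
    intro i
    fin_cases i
    · exact hle _ hx1
    · exact hle _ hy2)
  have hX : φ (MvPowerSeries.X 0) = x := hφ 0
  have hY : φ (MvPowerSeries.X 1) = y := hφ 1
  have hφp : φ (MvPowerSeries.C (p : PadicInt p)) = p := by simp
  have hdvdQ : ∀ i, Q 0 ≤ Q i → ∀ r : MvPowerSeries (Fin 2) (PadicInt p),
      (∀ m, (p : PadicInt p) ∣ MvPowerSeries.coeff m r) → φ r ∈ Q i := by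
    intro i hi r hr
    obtain ⟨h, rfl⟩ := aux_C_dvd r _ hr
    rw [map_mul, hφp]
    exact Ideal.mul_mem_right _ _ (hi hpQ)
  refine ⟨φ, (injective_iff_map_eq_zero φ).2 fun f hf => ?_⟩
  by_contra hf0
  -- Step 1: divide by the largest power of `p`.
  have hfin : FiniteMultiplicity (MvPowerSeries.C (p : PadicInt p)) f := by
    obtain ⟨m, hm⟩ : ∃ m, MvPowerSeries.coeff m f ≠ 0 := by
      by_contra! hc
      exact hf0 (MvPowerSeries.ext (by simpa using hc))
    obtain ⟨n, hn⟩ := FiniteMultiplicity.of_not_isUnit (PadicInt.prime_p (p := p)).not_isUnit hm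
    refine ⟨n, fun ⟨g, hg⟩ => hn ⟨MvPowerSeries.coeff m g, ?_⟩⟩
    rw [hg, ← map_pow, MvPowerSeries.coeff_C_mul]
  obtain ⟨f', hff', hf'⟩ := hfin.exists_eq_pow_mul_and_not_dvd
  have hf'0 : φ f' = 0 := by
    rw [hff', map_mul, map_pow, hφp] at hf
    refine (mul_eq_zero.1 hf).resolve_left (pow_ne_zero _ ?_)
    exact_mod_cast (Fact.out : p.Prime).ne_zero
  -- Step 2: modulo `p`, divide by the largest power of the first variable.
  have hex : ∃ k, ∃ m : Fin 2 →₀ ℕ, m 0 = k ∧ ¬ (p : PadicInt p) ∣ MvPowerSeries.coeff m f' := by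
    by_contra! hc
    exact hf' (aux_C_dvd _ _ fun m => hc _ m rfl)
  classical
  obtain ⟨k, ⟨m, hmk, hm⟩, hmin⟩ : ∃ k, (∃ m : Fin 2 →₀ ℕ, m 0 = k ∧
      ¬ (p : PadicInt p) ∣ MvPowerSeries.coeff m f') ∧
      ∀ m : Fin 2 →₀ ℕ, m 0 < k → (p : PadicInt p) ∣ MvPowerSeries.coeff m f' := by
    refine ⟨Nat.find hex, Nat.find_spec hex, fun m hm => ?_⟩
    by_contra hc
    exact Nat.find_min hex hm ⟨m, rfl, hc⟩
  obtain ⟨g, r, hf'g, hg, hr⟩ := aux_split f' 0 k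
  have hgQ : φ g ∈ Q 0 := by
    have hrQ : φ r ∈ Q 0 := hdvdQ 0 le_rfl r (by
      intro m
      rw [hr]
      split_ifs with h
      · exact hmin m h
      · exact dvd_zero _)
    have h0 : x ^ k * φ g + φ r ∈ Q 0 := by
      rw [← hX, ← map_pow, ← map_mul, ← map_add, ← hf'g, hf'0]
      exact zero_mem _
    rcases (hQ 0).mem_or_mem ((Ideal.add_mem_iff_left _ hrQ).1 h0) with h | h
    · exact absurd ((hQ 0).mem_of_pow_mem _ h) hx0
    · exact h
  -- Step 3: modulo `p` and the first variable.
  have hex2 : ∃ n, ¬ (p : PadicInt p) ∣ MvPowerSeries.coeff (Finsupp.single 1 n) g := by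
    refine ⟨m 1, ?_⟩
    rw [hg]
    convert hm
    ext i
    fin_cases i <;> simp [hmk]
  obtain ⟨n, hn, hnmin⟩ : ∃ n, (¬ (p : PadicInt p) ∣ MvPowerSeries.coeff (Finsupp.single 1 n) g) ∧
      ∀ n' < n, (p : PadicInt p) ∣ MvPowerSeries.coeff (Finsupp.single 1 n') g := by
    refine ⟨Nat.find hex2, Nat.find_spec hex2, fun n' hn' => ?_⟩
    by_contra hc
    exact Nat.find_min hex2 hn' hc
  obtain ⟨h', r0, hgh, -, hr0⟩ := aux_split g 0 1
  obtain ⟨u, r1, hru, hu, hr1⟩ := aux_split r0 1 n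
  have hr1Q : φ r1 ∈ Q 1 := hdvdQ 1 h01.le r1 (by
    intro m
    rw [hr1]
    split_ifs with h
    · rw [hr0]
      split_ifs with h0
      · have : m = Finsupp.single 1 (m 1) := by
          ext i
          fin_cases i
          · simpa using h0
          · simp
        rw [this]
        exact hnmin _ h
      · exact dvd_zero _
    · exact dvd_zero _)
  have hunit : IsUnit u := by
    rw [MvPowerSeries.isUnit_iff_constantCoeff, ← MvPowerSeries.coeff_zero_eq_constantCoeff_apply,
      hu, hr0]
    by_contra hc
    apply hn
    rw [← mem_nonunits_iff, ← IsLocalRing.mem_maximalIdeal,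
      PadicInt.maximalIdeal_eq_span_p, Ideal.mem_span_singleton] at hc
    simpa using hc
  have h1 : x ^ 1 * φ h' + (y ^ n * φ u + φ r1) ∈ Q 1 := by
    rw [← hX, ← hY, ← map_pow, ← map_mul, ← map_pow, ← map_mul, ← map_add, ← hru, ← map_add, ← hgh]
    exact h01.le hgQ
  have h2 : y ^ n * φ u ∈ Q 1 := by
    refine (Ideal.add_mem_iff_left _ hr1Q).1 ((Ideal.add_mem_iff_right _ ?_).1 h1)
    rw [pow_one]
    exact Ideal.mul_mem_right _ _ hx1
  rcases (hQ 1).mem_or_mem h2 with h | h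
  · exact hy1 ((hQ 1).mem_of_pow_mem _ h)
  · exact (hQ 1).ne_top (Ideal.eq_top_of_isUnit_mem _ h (hunit.map φ))
end

section
/- Let p be a prime and let S be a commutative Noetherian local pro-p domain of characteristic p with Krull dimension strictly greater than 1. Then there exists an injective ring homomorphism from 𝔽_p⟦s₁, s₂⟧, the power series ring in two variables over the field with p elements, into S. -/
open MvPowerSeries in
/-- Evaluation of power series over `ZMod p` at two elements of the maximal ideal. -/
theorem exists_eval_aux (p : ℕ) [Fact p.Prime]
    (S : Type) [CommRing S] [IsLocalRing S]
    [IsAdicComplete (IsLocalRing.maximalIdeal S) S] [CharP S p]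
    (a : Fin 2 → S) (ha : ∀ i, a i ∈ IsLocalRing.maximalIdeal S) :
    ∃ f : MvPowerSeries (Fin 2) (ZMod p) →+* S, ∀ i, f (X i) = a i := by
  letI : WithIdeal S := ⟨IsLocalRing.maximalIdeal S⟩
  have hadic : IsAdic (IsLocalRing.maximalIdeal S) := rfl
  obtain ⟨h1, h2⟩ := hadic.isAdicComplete_iff.mp inferInstance
  letI : UniformSpace (ZMod p) := ⊥
  haveI : DiscreteTopology (ZMod p) := ⟨rfl⟩
  haveI : DiscreteUniformity (ZMod p) := ⟨rfl⟩
  haveI : IsUniformAddGroup (ZMod p) := ⟨DiscreteUniformity.uniformContinuous _ _⟩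
  have hev : HasEval a := by
    refine ⟨fun s => ?_, by simp [Filter.cofinite_eq_bot]⟩
    refine (hadic.hasBasis_nhds_zero.tendsto_right_iff).2 fun n _ => ?_
    filter_upwards [Filter.eventually_ge_atTop n] with k hk
    exact Ideal.pow_le_pow_right hk (Ideal.pow_mem_pow (ha s) k)
  have hc : Continuous (ZMod.castHom (dvd_refl p) S) := continuous_of_discreteTopology
  refine ⟨eval₂Hom hc hev, fun i => ?_⟩
  rw [coe_eval₂Hom, eval₂_X]

open MvPowerSeries in
theorem decomp_aux {k : Type} [Field k] (g : MvPowerSeries (Fin 2) k)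
    (hg : ¬ (X 1 : MvPowerSeries (Fin 2) k) ∣ g) :
    ∃ (n : ℕ) (u h : MvPowerSeries (Fin 2) k), IsUnit u ∧ g = X 0 ^ n * u + X 1 * h := by
  classical
  have hex : ∃ n : ℕ, coeff (Finsupp.single (0 : Fin 2) n) g ≠ 0 := by
    rw [X_dvd_iff] at hg
    push Not at hg
    obtain ⟨m, hm, hm'⟩ := hg
    refine ⟨m 0, ?_⟩
    have hms : Finsupp.single 0 (m 0) = m := by
      ext i
      fin_cases i <;> simp [hm]
    rwa [hms]
  let n := Nat.find hex
  have hn : coeff (Finsupp.single (0 : Fin 2) n) g ≠ 0 := Nat.find_spec hex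
  have hlt : ∀ m < n, coeff (Finsupp.single (0 : Fin 2) m) g = 0 := fun m hm => by
    simpa using Nat.find_min hex hm
  let u : MvPowerSeries (Fin 2) k := fun m => coeff (Finsupp.single 0 n + m) g
  have hu : ∀ m, coeff m u = coeff (Finsupp.single 0 n + m) g := fun m => rfl
  have hd : (X 1 : MvPowerSeries (Fin 2) k) ∣ g - X 0 ^ n * u := by
    rw [X_dvd_iff]
    intro m hm
    have hm' : m = Finsupp.single 0 (m 0) := by
      ext i
      fin_cases i <;> simp [hm]
    rw [map_sub, X_pow_eq, coeff_monomial_mul]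
    split_ifs with hle
    · rw [hu, one_mul, add_tsub_cancel_of_le hle, sub_self]
    · rw [sub_zero, hm']
      apply hlt
      by_contra hcon
      apply hle
      rw [hm']
      simpa using hcon
  obtain ⟨h, hh⟩ := hd
  refine ⟨n, u, h, ?_, by rw [← hh]; ring⟩
  rw [isUnit_iff_constantCoeff, ← coeff_zero_eq_constantCoeff_apply, hu, add_zero]
  exact isUnit_iff_ne_zero.mpr hn

open MvPowerSeries in
theorem factor_aux {k : Type} [Field k] (f : MvPowerSeries (Fin 2) k) (hf : f ≠ 0) :
    ∃ (n : ℕ) (g : MvPowerSeries (Fin 2) k), ¬ X 1 ∣ g ∧ f = X 1 ^ n * g := by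
  obtain ⟨m, hm⟩ : ∃ m, coeff m f ≠ 0 := by
    by_contra! h
    exact hf (MvPowerSeries.ext (by simpa using h))
  have hfin : FiniteMultiplicity (X 1 : MvPowerSeries (Fin 2) k) f :=
    ⟨m 1, fun h => hm (X_pow_dvd_iff.mp h m (Nat.lt_succ_self _))⟩
  obtain ⟨g, hg, hg'⟩ := hfin.exists_eq_pow_mul_and_not_dvd
  exact ⟨_, g, hg', hg⟩

theorem params_aux (S : Type) [CommRing S] [IsDomain S] [IsNoetherianRing S] [IsLocalRing S]
    (hS : 1 < ringKrullDim S) :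
    ∃ x ∈ IsLocalRing.maximalIdeal S, ∃ y ∈ IsLocalRing.maximalIdeal S,
      y ≠ 0 ∧ ∀ n, x ^ n ∉ Ideal.span {y} := by
  rw [← IsLocalRing.maximalIdeal_height_eq_ringKrullDim] at hS
  have hS' : 1 < (IsLocalRing.maximalIdeal S).height := by exact_mod_cast hS
  have hne : IsLocalRing.maximalIdeal S ≠ ⊥ := by
    intro h
    rw [h] at hS'
    simp at hS'
  obtain ⟨y, hy, hy0⟩ := Submodule.exists_mem_ne_zero_of_ne_bot hne
  have hle : Ideal.span {y} ≤ IsLocalRing.maximalIdeal S :=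
    (Ideal.span_singleton_le_iff_mem _).2 hy
  obtain ⟨Q, hQ, hQm⟩ := Ideal.exists_minimalPrimes_le hle
  haveI := hQ.1.1
  have hQ1 : Q.height ≤ 1 := Ideal.height_le_one_of_isPrincipal_of_mem_minimalPrimes _ Q hQ
  have : ¬ IsLocalRing.maximalIdeal S ≤ Q := fun h =>
    absurd (hS'.trans_le (Ideal.height_mono h)) (not_lt.2 hQ1)
  obtain ⟨x, hx, hxQ⟩ := SetLike.not_le_iff_exists.1 this
  exact ⟨x, hx, y, hy, hy0, fun n hn => hxQ (Ideal.IsPrime.mem_of_pow_mem ‹_› n (hQ.1.2 hn))⟩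


/-- Every commutative Noetherian local pro-`p` domain of characteristic
`p` and Krull dimension `> 1` contains a copy of `𝔽_p⟦s₁, s₂⟧`: there is an injective
ring homomorphism `𝔽_p⟦s₁, s₂⟧ → S`. -/
theorem exists_embedding_finite_field_power_series_two_vars (p : ℕ) [Fact p.Prime]
    (S : Type) [CommRing S] [IsDomain S] [IsNoetherianRing S] [IsLocalRing S]
    [IsAdicComplete (IsLocalRing.maximalIdeal S) S]
    [Finite (IsLocalRing.ResidueField S)] [CharP (IsLocalRing.ResidueField S) p]
    [CharP S p]
    (hS : 1 < ringKrullDim S) :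
    ∃ f : MvPowerSeries (Fin 2) (ZMod p) →+* S, Function.Injective f := by
  obtain ⟨x, hx, y, hy, hy0, hxy⟩ := params_aux S hS
  obtain ⟨φ, hφ⟩ := exists_eval_aux p S ![x, y] (by
    intro i
    fin_cases i
    · exact hx
    · exact hy)
  have h0 : φ (MvPowerSeries.X 0) = x := hφ 0
  have h1 : φ (MvPowerSeries.X 1) = y := hφ 1
  refine ⟨φ, (injective_iff_map_eq_zero φ).2 fun f hf => ?_⟩
  by_contra hf0
  obtain ⟨k, g, hg, rfl⟩ := factor_aux f hf0
  rw [map_mul, map_pow, h1] at hf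
  have hg0 : φ g = 0 := (mul_eq_zero.1 hf).resolve_left (pow_ne_zero _ hy0)
  obtain ⟨n, u, h, hu, rfl⟩ := decomp_aux g hg
  rw [map_add, map_mul, map_mul, map_pow, h0, h1] at hg0
  apply hxy n
  rw [← Ideal.mul_unit_mem_iff_mem _ (hu.map φ), eq_neg_of_add_eq_zero_left hg0]
  exact neg_mem (Ideal.mul_mem_right _ _ (Ideal.mem_span_singleton_self y))
end
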